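/- arXiv:1108.0586 — 8 statements merged into one kernel-verified Lean document; each statement's English description precedes it below -/
import Mathlib

section
/- Let K be a field of characteristic 0. Let P be a multilinear polynomial of degree 6 in one formal bilinear operation such that, in every alternative dialgebra over K, P vanishes identically when the formal operation is interpreted as the dicommutator ⟨a,b⟩ = a ⊣ b − b ⊢ a. Then P vanishes identically in every Malcev dialgebra over K; in other words, there are no special identities for Malcev dialgebras in degree 6, so any special identity for Malcev dialgebras must have degree at least 7. -/
/-- Formal monomials of a single binary operation in variables `x_0, …, x_{n-1}`:
binary trees whose leaves are labelled by variables. -/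
inductive BTree (n : ℕ) : Type
  | leaf : Fin n → BTree n
  | node : BTree n → BTree n → BTree n

namespace BTree

/-- Evaluate a monomial in an algebra with binary operation `m`,
assigning the value `x i` to the variable `i`. -/
def eval {n : ℕ} {V : Type} (m : V → V → V) (x : Fin n → V) : BTree n → V
  | leaf i => x i
  | node s t => m (eval m x s) (eval m x t)

/-- The multiset of variables occurring in a monomial. -/
def vars {n : ℕ} : BTree n → Multiset (Fin n)
  | leaf i => {i}
  | node s t => vars s + vars t

/-- A monomial of degree `n` is multilinear if each of the `n` variables
occurs in it exactly once. -/
def Multilinear {n : ℕ} (t : BTree n) : Prop :=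
  vars t = (Finset.univ : Finset (Fin n)).val

end BTree

/-- The Jacobian `(ab)c + (bc)a + (ca)b`. -/
def jac {Z : Type*} [NonUnitalNonAssocRing Z] (a b c : Z) : Z := a * b * c + b * c * a + c * a * b

/-- Malcev algebras, presented by anticommutativity and Sagle's expansion of `J(ab, c, d)`. -/
structure IsMalcev (Z : Type*) [NonUnitalNonAssocRing Z] : Prop where
  anticomm : ∀ a b : Z, b * a = -(a * b)
  three_jac_mul : ∀ a b c d : Z, (3 : ℤ) • jac (a * b) c d =
    jac b c d * a - jac a c d * b - (2 : ℤ) • (jac a b d * c) + (2 : ℤ) • (jac a b c * d)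

section Jacobian

variable {Z : Type*} [NonUnitalNonAssocRing Z]

theorem jac_rotate (a b c : Z) : jac b c a = jac a b c := by
  simp only [jac]; abel

theorem IsMalcev.jac_swap_left (h : IsMalcev Z) (a b c : Z) : jac b a c = -jac a b c := by
  simp only [jac, h.anticomm a b, h.anticomm b c, h.anticomm a c]
  simp only [neg_mul, h.anticomm c a, neg_neg]
  abel

theorem IsMalcev.jac_swap_right (h : IsMalcev Z) (a b c : Z) : jac a c b = -jac a b c := by
  rw [← jac_rotate, h.jac_swap_left, jac_rotate, jac_rotate]

/-- Sagle's four-variable identity gives the expansion of `J(ab, c, d)`. -/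
theorem isMalcev_of_sagle (anti : ∀ a b : Z, b * a = -(a * b))
    (sagle : ∀ x y z w : Z, (x * z) * (y * w) =
      x * y * z * w + y * z * w * x + z * w * x * y + w * x * y * z) : IsMalcev Z where
  anticomm := anti
  three_jac_mul a b c d := by
    have h1 := sagle a d b c
    have h2 := sagle a c d b
    have h3 := sagle d c a b
    have h4 := sagle a c b d
    simp only [jac, add_mul, anti a b, anti a c, anti a d, anti b c, anti b d, anti c d, neg_mul,
      mul_neg, neg_neg, anti (a * b) d, anti (a * b) (c * d)] at h1 h2 h3 h4 ⊢
    linear_combination (norm := module) (2 : ℤ) • h1 + h2 + h3 - h4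

end Jacobian

/-- The space `V` with the product given by the bilinear map `μ`. -/
def AlgebraOf {K V : Type*} [Field K] [AddCommGroup V] [Module K V]
    (_μ : V →ₗ[K] V →ₗ[K] V) : Type _ := V

namespace AlgebraOf

variable {K V : Type*} [Field K] [AddCommGroup V] [Module K V] (μ : V →ₗ[K] V →ₗ[K] V)

instance : AddCommGroup (AlgebraOf μ) := inferInstanceAs (AddCommGroup V)

instance : Module K (AlgebraOf μ) := inferInstanceAs (Module K V)

/-- The identity map onto `AlgebraOf μ`. -/
def of : V ≃ₗ[K] AlgebraOf μ := LinearEquiv.refl K V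

instance : NonUnitalNonAssocRing (AlgebraOf μ) where
  mul a b := of μ (μ ((of μ).symm a) ((of μ).symm b))
  left_distrib a b c := by
    change of μ _ = of μ _ + of μ _
    simp only [map_add]
  right_distrib a b c := by
    change of μ _ = of μ _ + of μ _
    simp only [map_add, LinearMap.add_apply]
  zero_mul a := by
    change of μ _ = _
    simp only [map_zero, LinearMap.zero_apply]
  mul_zero a := by
    change of μ _ = _
    simp only [map_zero]

theorem of_mul_of (a b : V) : of μ a * of μ b = of μ (μ a b) := rfl

end AlgebraOf

/-- Alternative algebras, presented by the skew-symmetry of the associator. -/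
structure IsAlternative (A : Type*) [NonUnitalNonAssocRing A] : Prop where
  swap_left : ∀ a b c : A, associator b a c = -associator a b c
  swap_right : ∀ a b c : A, associator a c b = -associator a b c

section Commutator

variable (K : Type*) {A : Type*} [Field K] [NonUnitalNonAssocRing A] [Module K A]
  [IsScalarTower K A A] [SMulCommClass K A A]

variable (A) in
/-- The commutator `ab - ba` as a bilinear map. -/
def commutator₂ : A →ₗ[K] A →ₗ[K] A := LinearMap.mul K A - (LinearMap.mul K A).flip

theorem commutator₂_apply (a b : A) : commutator₂ K A a b = a * b - b * a := rfl

variable (A) in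
/-- The commutator algebra of `A`. -/
abbrev CommutatorAlgebra : Type _ := AlgebraOf (commutator₂ K A)

theorem IsAlternative.jac_of (h : IsAlternative A) (a b c : A) :
    jac (AlgebraOf.of (commutator₂ K A) a) (AlgebraOf.of _ b) (AlgebraOf.of _ c) =
      AlgebraOf.of _ ((6 : ℤ) • associator a b c) := by
  have h1 := h.swap_left a b c
  have h2 := h.swap_right a b c
  have h3 := h.swap_left a c b
  have h4 := h.swap_right b a c
  have h5 := h.swap_left b c a
  simp only [jac, AlgebraOf.of_mul_of, commutator₂_apply, ← map_add]
  congr 1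
  simp only [associator, mul_sub, sub_mul] at *
  linear_combination (norm := module) -(3 : ℤ) • h1 - (2 : ℤ) • h2 + h3 + (2 : ℤ) • h4 - h5

theorem IsAlternative.isMalcev (h : IsAlternative A) : IsMalcev (CommutatorAlgebra K A) where
  anticomm a b := by
    obtain ⟨a, rfl⟩ := (AlgebraOf.of _).surjective a
    obtain ⟨b, rfl⟩ := (AlgebraOf.of _).surjective b
    simp only [AlgebraOf.of_mul_of, commutator₂_apply, ← map_neg, neg_sub]
  three_jac_mul a b c d := by
    obtain ⟨a, rfl⟩ := (AlgebraOf.of _).surjective a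
    obtain ⟨b, rfl⟩ := (AlgebraOf.of _).surjective b
    obtain ⟨c, rfl⟩ := (AlgebraOf.of _).surjective c
    obtain ⟨d, rfl⟩ := (AlgebraOf.of _).surjective d
    simp only [AlgebraOf.of_mul_of, h.jac_of K, commutator₂_apply, ← map_zsmul, ← map_add,
      ← map_sub]
    congr 1
    have sub_left : ∀ x y z w : A,
        associator (x - y) z w = associator x z w - associator y z w := fun x y z w => by
      simp only [associator, sub_mul]; abel
    have cocycle : ∀ x y z w : A, associator (x * y) z w - associator (y * z) w x +
        associator (z * w) x y = x * associator y z w + associator x y z * w := fun x y z w => by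
      have h1 := associator_cocycle x y z w
      rw [h.swap_left (y * z), h.swap_right (y * z), h.swap_right x (z * w),
        h.swap_left (z * w)] at h1
      linear_combination (norm := module) -h1
    have t1 := cocycle b c d a
    have t2 := cocycle d a b c
    have t3 := cocycle c d b a
    have t4 := cocycle a c d b
    have t5 := cocycle b a c d
    have t6 := cocycle d b a c
    have l1 := fun x => h.swap_left a b x
    have l2 := fun x => h.swap_left a c x
    have l3 := fun x => h.swap_left a d x
    have l4 := fun x => h.swap_left b c x
    have l5 := fun x => h.swap_left b d x
    have r1 := fun x => h.swap_right x a b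
    have r3 := fun x => h.swap_right x a d
    have r5 := fun x => h.swap_right x b d
    simp only [l1, l2, l3, l4, l5, r1, r3, r5, sub_left, mul_smul_comm,
      smul_mul_assoc, neg_mul, mul_neg, neg_neg] at t1 t2 t3 t4 t5 t6 ⊢
    linear_combination (norm := module) (6 : ℤ) • ((3 : ℤ) • t1 - (3 : ℤ) • t2 - (2 : ℤ) • t3 - t4 -
      (2 : ℤ) • t5 - t6)

end Commutator

namespace IsMalcev

variable {Z : Type*} [NonUnitalNonAssocRing Z]

/-- Comparison of the two expansions of `J(ab, cd, e)`. -/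
theorem jac_mul_mul_add (h : IsMalcev Z) (a b c d e : Z) :
    (6 : ℤ) • (jac a b e * (c * d)) + (6 : ℤ) • (jac c d e * (a * b)) =
      (jac d e b * c - jac c e b * d - (2 : ℤ) • (jac c d b * e) + (2 : ℤ) • (jac c d e * b)) * a
      - (jac d e a * c - jac c e a * d - (2 : ℤ) • (jac c d a * e) + (2 : ℤ) • (jac c d e * a)) * b
      + (2 : ℤ) • ((jac d a b * c - jac c a b * d - (2 : ℤ) • (jac c d b * a) +
        (2 : ℤ) • (jac c d a * b)) * e)
      - (jac b d e * a - jac a d e * b - (2 : ℤ) • (jac a b e * d) + (2 : ℤ) • (jac a b d * e)) * c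
      + (jac b c e * a - jac a c e * b - (2 : ℤ) • (jac a b e * c) + (2 : ℤ) • (jac a b c * e)) * d
      + (2 : ℤ) • ((jac b c d * a - jac a c d * b - (2 : ℤ) • (jac a b d * c) +
        (2 : ℤ) • (jac a b c * d)) * e) := by
  have h1 := h.three_jac_mul a b (c * d) e
  have h2 := h.three_jac_mul c d e (a * b)
  rw [← h.three_jac_mul c d e b, ← h.three_jac_mul c d e a, ← h.three_jac_mul c d a b,
    ← h.three_jac_mul a b d e, ← h.three_jac_mul a b c e, ← h.three_jac_mul a b c d]
  simp only [smul_mul_assoc]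
  rw [jac_rotate (a * b), jac_rotate (a * b) d e, jac_rotate (a * b) c e,
    jac_rotate (a * b) c d] at h2
  rw [← jac_rotate b (c * d) e, ← jac_rotate a (c * d) e, jac_rotate (c * d) a b] at h1
  linear_combination (norm := module) (3 : ℤ) • h1 - (3 : ℤ) • h2

/-- The product of a Jacobian with a product, in terms of iterated products with single factors. -/
theorem twelve_jac_mul_mul (h : IsMalcev Z) (a b c d e : Z) :
    (12 : ℤ) • (jac a b c * (d * e)) =
    -(jac c d e * a * b) + jac b d e * a * c - (3 : ℤ) • (jac b c e * a * d)
      + (3 : ℤ) • (jac b c d * a * e) + jac c d e * b * a - jac a d e * b * c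
      + (3 : ℤ) • (jac a c e * b * d) - (3 : ℤ) • (jac a c d * b * e) - jac b d e * c * a
      + jac a d e * c * b - (3 : ℤ) • (jac a b e * c * d) + (3 : ℤ) • (jac a b d * c * e)
      - (5 : ℤ) • (jac b c e * d * a) + (5 : ℤ) • (jac a c e * d * b)
      - (5 : ℤ) • (jac a b e * d * c) - (3 : ℤ) • (jac a b c * d * e)
      + (5 : ℤ) • (jac b c d * e * a) - (5 : ℤ) • (jac a c d * e * b)
      + (5 : ℤ) • (jac a b d * e * c) + (3 : ℤ) • (jac a b c * e * d) := by
  have t1 := h.jac_mul_mul_add a c b d e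
  have t2 := h.jac_mul_mul_add b c d e a
  have t3 := h.jac_mul_mul_add a c d e b
  have t4 := h.jac_mul_mul_add a e b d c
  have t5 := h.jac_mul_mul_add a e b c d
  have l0 := fun x => h.jac_swap_left a b x
  have l1 := fun x => h.jac_swap_left a c x
  have l2 := fun x => h.jac_swap_left a d x
  have l3 := fun x => h.jac_swap_left a e x
  have l4 := fun x => h.jac_swap_left b c x
  have l5 := fun x => h.jac_swap_left b d x
  have l6 := fun x => h.jac_swap_left b e x
  have l7 := fun x => h.jac_swap_left c d x
  have l8 := fun x => h.jac_swap_left c e x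
  have l9 := fun x => h.jac_swap_left d e x
  have r1 := fun x => h.jac_swap_right x a c
  have r2 := fun x => h.jac_swap_right x a d
  have r3 := fun x => h.jac_swap_right x a e
  have r4 := fun x => h.jac_swap_right x b c
  have r5 := fun x => h.jac_swap_right x b d
  have r6 := fun x => h.jac_swap_right x b e
  have r7 := fun x => h.jac_swap_right x c d
  have r8 := fun x => h.jac_swap_right x c e
  have r9 := fun x => h.jac_swap_right x d e
  simp only [l0, l1, l2, l3, l4, l5, l6, l7, l8, l9, r1, r2, r3, r4, r5, r6, r7, r8, r9,
    add_mul, sub_mul, smul_mul_assoc, neg_mul, neg_neg, smul_neg] at t1 t2 t3 t4 t5 ⊢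
  linear_combination (norm := module) t1 + t2 - t3 + t4 + t5

/-- The expansion of `J(xd, e, f)`, written with products from the right only. -/
theorem three_right_mul (h : IsMalcev Z) (x d e f : Z) :
    (3 : ℤ) • (x * d * (e * f)) = (3 : ℤ) • (x * d * e * f) - (3 : ℤ) • (x * d * f * e)
      + x * jac d e f + (x * e * f - x * f * e - x * (e * f)) * d
      + (2 : ℤ) • ((x * d * f - x * f * d - x * (d * f)) * e)
      - (2 : ℤ) • ((x * d * e - x * e * d - x * (d * e)) * f) := by
  have expand : ∀ y u v : Z, jac y u v = y * u * v - y * v * u - y * (u * v) := fun y u v => by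
    rw [jac, h.anticomm y (u * v), h.anticomm y v, neg_mul]; abel
  have h1 := h.three_jac_mul x d e f
  rw [h.anticomm x (jac d e f), expand (x * d), expand x e f, expand x d f, expand x d e] at h1
  linear_combination (norm := module) -h1

end IsMalcev

/-- Formal products of variables indexed by natural numbers. -/
inductive Mono : Type
  | var : ℕ → Mono
  | mul : Mono → Mono → Mono

namespace Mono

/-- Evaluation of a formal product. -/
def eval {Z : Type*} [Mul Z] (z : ℕ → Z) : Mono → Z
  | var n => z n
  | mul s t => eval z s * eval z t

/-- The number of multiplications in a formal product. -/
def nodes : Mono → ℕ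
  | var _ => 0
  | mul s t => nodes s + nodes t + 1

/-- Boolean equality of formal products. -/
def beq : Mono → Mono → Bool
  | var m, var n => Nat.beq m n
  | mul s t, mul s' t' => beq s s' && beq t t'
  | _, _ => false

theorem eq_of_beq : ∀ {s t : Mono}, beq s t = true → s = t
  | var _, var _, h => congrArg var (Nat.eq_of_beq_eq_true h)
  | mul _ _, mul _ _, h => by
    simp only [beq, Bool.and_eq_true] at h
    rw [eq_of_beq h.1, eq_of_beq h.2]
  | var _, mul _ _, h => by simp [beq] at h
  | mul _ _, var _, h => by simp [beq] at h

/-- A numerical key used for ordering formal products. -/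
def key : Mono → ℕ
  | var n => n
  | mul s t => 8 * key s + key t + 64

/-- Right multiplication by a list of formal products. -/
def rightMul {Z : Type*} [NonUnitalNonAssocRing Z] (z : ℕ → Z) : List Mono → Z →+ Z
  | [] => AddMonoidHom.id Z
  | t :: ts => (rightMul z ts).comp (AddMonoidHom.mulRight (t.eval z))

end Mono

open Mono

/-- The formal word `J(a, b, c) t₁ ⋯ tₖ`, multiplied from the left. -/
structure JacWord where
  a : Mono
  b : Mono
  c : Mono
  ts : List Mono

namespace JacWord

/-- The total number of multiplications inside the factors of a word. -/
def nodes (w : JacWord) : ℕ :=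
  w.a.nodes + w.b.nodes + w.c.nodes + (w.ts.map Mono.nodes).sum

/-- Boolean equality of lists of formal products. -/
def beqList : List Mono → List Mono → Bool
  | [], [] => true
  | s :: ss, t :: ts => Mono.beq s t && beqList ss ts
  | _, _ => false

theorem eq_of_beqList : ∀ {s t : List Mono}, beqList s t = true → s = t
  | [], [], _ => rfl
  | _ :: _, _ :: _, h => by
    simp only [beqList, Bool.and_eq_true] at h
    rw [eq_of_beq h.1, eq_of_beqList h.2]
  | [], _ :: _, h => by simp [beqList] at h
  | _ :: _, [], h => by simp [beqList] at h

/-- Boolean equality of words. -/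
def beq (w w' : JacWord) : Bool :=
  Mono.beq w.a w'.a && Mono.beq w.b w'.b && Mono.beq w.c w'.c && beqList w.ts w'.ts

theorem eq_of_beq {w w' : JacWord} (h : beq w w' = true) : w = w' := by
  cases w; cases w'
  simp only [beq, Bool.and_eq_true] at h
  obtain ⟨⟨⟨h1, h2⟩, h3⟩, h4⟩ := h
  rw [Mono.eq_of_beq h1, Mono.eq_of_beq h2, Mono.eq_of_beq h3, eq_of_beqList h4]

/-- A numerical key used for ordering lists of formal products. -/
def keyList : List Mono → ℕ
  | [] => 0
  | t :: ts => t.key + 1024 * keyList ts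

/-- A numerical key used for ordering words. -/
def key (w : JacWord) : ℕ := w.a.key + 8 * w.b.key + 64 * w.c.key + 512 * keyList w.ts

section Value

variable {Z V : Type*} [NonUnitalNonAssocRing Z] [AddCommGroup V] (z : ℕ → Z) (π : Z →+ V)

/-- The value of a word. -/
def eval (w : JacWord) : Z :=
  rightMul z w.ts (jac (w.a.eval z) (w.b.eval z) (w.c.eval z))

/-- The value of a word under `π`, rescaled so that all rewriting rules are integral. -/
def val (w : JacWord) : V := (12 ^ w.nodes : ℤ) • π (eval z w)

/-- The value of a formal linear combination of words. -/
def sumVal (l : List (ℤ × JacWord)) : V := (l.map fun p => p.1 • val z π p.2).sum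

theorem sumVal_append (l l' : List (ℤ × JacWord)) :
    sumVal z π (l ++ l') = sumVal z π l + sumVal z π l' := by
  simp [sumVal]

/-- Multiplication of a formal linear combination by an integer. -/
def scale (c : ℤ) (l : List (ℤ × JacWord)) : List (ℤ × JacWord) := l.map fun p => (c * p.1, p.2)

theorem sumVal_scale (c : ℤ) (l : List (ℤ × JacWord)) :
    sumVal z π (scale c l) = c • sumVal z π l := by
  simp [sumVal, scale, List.smul_sum, Function.comp_def, mul_smul]

end Value

/-- The terms of the expansion of `J(a, b, c)(de) ts`. -/
def expandMul (a b c d e : Mono) (ts : List Mono) : List (ℤ × JacWord) :=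
    [(-1, ⟨c, d, e, a :: b :: ts⟩), (1, ⟨b, d, e, a :: c :: ts⟩),
    (-3, ⟨b, c, e, a :: d :: ts⟩), (3, ⟨b, c, d, a :: e :: ts⟩),
    (1, ⟨c, d, e, b :: a :: ts⟩), (-1, ⟨a, d, e, b :: c :: ts⟩),
    (3, ⟨a, c, e, b :: d :: ts⟩), (-3, ⟨a, c, d, b :: e :: ts⟩),
    (-1, ⟨b, d, e, c :: a :: ts⟩), (1, ⟨a, d, e, c :: b :: ts⟩),
    (-3, ⟨a, b, e, c :: d :: ts⟩), (3, ⟨a, b, d, c :: e :: ts⟩),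
    (-5, ⟨b, c, e, d :: a :: ts⟩), (5, ⟨a, c, e, d :: b :: ts⟩),
    (-5, ⟨a, b, e, d :: c :: ts⟩), (-3, ⟨a, b, c, d :: e :: ts⟩),
    (5, ⟨b, c, d, e :: a :: ts⟩), (-5, ⟨a, c, d, e :: b :: ts⟩),
    (5, ⟨a, b, d, e :: c :: ts⟩), (3, ⟨a, b, c, e :: d :: ts⟩)]

/-- The terms of the expansion of `J(ab, c, d) ts`. -/
def expandJac (a b c d : Mono) (ts : List Mono) : List (ℤ × JacWord) :=
  [(4, ⟨b, c, d, a :: ts⟩), (-4, ⟨a, c, d, b :: ts⟩), (-8, ⟨a, b, d, c :: ts⟩),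
    (8, ⟨a, b, c, d :: ts⟩)]

/-- One rewriting step. -/
def step : JacWord → List (ℤ × JacWord)
  | ⟨mul a b, c, d, ts⟩ => expandJac a b c d ts
  | ⟨var n, mul a b, d, ts⟩ => expandJac a b d (var n) ts
  | ⟨var m, var n, mul a b, ts⟩ => expandJac a b (var m) (var n) ts
  | ⟨var i, var j, var k, [mul d e, f]⟩ => expandMul (var i) (var j) (var k) d e [f]
  | w => [(1, w)]

/-- Sorting of the arguments of the Jacobian. -/
def sortJac (i j k : ℕ) (ts : List Mono) : ℤ × JacWord :=
  bif Nat.ble i j then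
    bif Nat.ble j k then (1, ⟨var i, var j, var k, ts⟩)
    else bif Nat.ble i k then (-1, ⟨var i, var k, var j, ts⟩)
    else (1, ⟨var k, var i, var j, ts⟩)
  else
    bif Nat.ble i k then (-1, ⟨var j, var i, var k, ts⟩)
    else bif Nat.ble j k then (1, ⟨var j, var k, var i, ts⟩)
    else (-1, ⟨var k, var j, var i, ts⟩)

/-- Sorting of a word of one of the shapes `J(i, j, k) d e f` and `J(i, j, k) d (ef)`. -/
def sort : JacWord → ℤ × JacWord
  | ⟨var i, var j, var k, [d, mul (var e) (var f)]⟩ =>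
    bif Nat.ble e f then sortJac i j k [d, mul (var e) (var f)]
    else ((-1) * (sortJac i j k [d, mul (var f) (var e)]).1,
      (sortJac i j k [d, mul (var f) (var e)]).2)
  | ⟨var i, var j, var k, ts⟩ => sortJac i j k ts
  | w => (1, w)

/-- The entry `c • w` with the sign of its sorted word absorbed into the coefficient. -/
def sortEntry (p : ℤ × JacWord) : ℤ × JacWord :=
  match sort p.2 with
  | (s, w) => (p.1 * s, w)

/-- Merging of two ordered linear combinations, with collection of equal words. -/
def merge : ℕ → List (ℤ × JacWord) → List (ℤ × JacWord) → List (ℤ × JacWord)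
  | 0, l, m => l ++ m
  | _ + 1, [], m => m
  | _ + 1, l, [] => l
  | n + 1, p :: l, q :: m =>
    bif Nat.beq p.2.key q.2.key && beq p.2 q.2 then (p.1 + q.1, p.2) :: merge n l m
    else bif Nat.ble p.2.key q.2.key then p :: merge n l (q :: m)
    else q :: merge n (p :: l) m

/-- Merging of neighbouring linear combinations. -/
def mergePairs : List (List (ℤ × JacWord)) → List (List (ℤ × JacWord))
  | l :: l' :: ls => merge 900 l l' :: mergePairs ls
  | ls => ls

/-- Repeated merging of neighbouring linear combinations. -/
def mergeRounds : ℕ → List (List (ℤ × JacWord)) → List (List (ℤ × JacWord))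
  | 0, ls => ls
  | n + 1, ls => mergeRounds n (mergePairs ls)

/-- Rewriting, sorting and collection of a formal linear combination. -/
def normalize (l : List (ℤ × JacWord)) : List (ℤ × JacWord) :=
  (mergeRounds 8 ((l.flatMap fun p => scale p.1 (step p.2)).map fun p => [sortEntry p])).flatten

end JacWord

/-- The kinds of relations between words of degree six. -/
inductive RelKind : Type
  | jac
  | mul
  | right
  | sym
  | skew

/-- An integer multiple of a relation between words in six variables. -/
structure RelTerm where
  coef : ℤ
  kind : RelKind
  a : ℕ
  b : ℕ
  c : ℕ
  d : ℕ
  e : ℕ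
  f : ℕ

open JacWord

/-- Six distinct natural numbers below six. -/
def IsPerm (a b c d e f : ℕ) : Prop := [a, b, c, d, e, f].Nodup ∧ ∀ n ∈ [a, b, c, d, e, f], n < 6

instance (a b c d e f : ℕ) : Decidable (IsPerm a b c d e f) := inferInstanceAs (Decidable (_ ∧ _))

namespace RelTerm

/-- The words of a relation. -/
def words (r : RelTerm) : List (ℤ × JacWord) :=
  match r with
  | ⟨_, k, a, b, c, d, e, f⟩ =>
    match k with
    | .jac => (-1, ⟨mul (var a) (var b), var c, var d, [mul (var e) (var f)]⟩) ::
        expandMul (mul (var a) (var b)) (var c) (var d) (var e) (var f) []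
    | .mul => (-1, ⟨var a, var b, var c, [mul (mul (var d) (var e)) (var f)]⟩) ::
        expandMul (var a) (var b) (var c) (mul (var d) (var e)) (var f) []
    | .right =>
      let w (ts : List Mono) : JacWord := ⟨var a, var b, var c, ts⟩
      [(144, w [var d, var e, var f]), (-144, w [var d, var f, var e]),
        (-36, w [var d, mul (var e) (var f)]), (1, w [mul (mul (var d) (var e)) (var f)]),
        (1, w [mul (mul (var e) (var f)) (var d)]), (1, w [mul (mul (var f) (var d)) (var e)]),
        (144, w [var e, var f, var d]), (-144, w [var f, var e, var d]),
        (-12, w [mul (var e) (var f), var d]), (-288, w [var f, var d, var e]),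
        (-24, w [mul (var d) (var f), var e]), (288, w [var e, var d, var f]),
        (24, w [mul (var d) (var e), var f])]
    | .sym =>
      let w (d e f : ℕ) : JacWord := ⟨var a, var b, var c, [var d, var e, var f]⟩
      [(1, w d e f), (1, w d f e), (1, w e d f), (1, w e f d), (1, w f d e), (1, w f e d)]
    | .skew =>
      let w (d e f : ℕ) : JacWord := ⟨var a, var b, var c, [var d, var e, var f]⟩
      [(1, w d e f), (-1, w d f e), (-1, w e d f), (1, w e f d), (1, w f d e), (-1, w f e d)]

/-- Relations of the last two kinds are only used for distinct variables. -/
def admissible (r : RelTerm) : Bool :=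
  match r.kind with
  | .sym | .skew => decide (IsPerm r.a r.b r.c r.d r.e r.f)
  | _ => true

end RelTerm

/-- The words `J(a, b, c)((de)f)` in distinct variables. -/
def JacWord.isNegligible : JacWord → Bool
  | ⟨var a, var b, var c, [mul (mul (var d) (var e)) (var f)]⟩ => decide (IsPerm a b c d e f)
  | ⟨var a, var b, var c, [mul (var f) (mul (var d) (var e))]⟩ => decide (IsPerm a b c d e f)
  | _ => false

/-- Relations that express `J(0, 1, 2) 3 4 5` by negligible words. -/
def certificate : List RelTerm :=
  [⟨252, .jac, 0, 3, 1, 2, 4, 5⟩, ⟨-252, .jac, 1, 3, 0, 2, 4, 5⟩, ⟨252, .jac, 2, 3, 0, 1, 4, 5⟩,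
   ⟨234, .mul, 0, 1, 2, 3, 4, 5⟩, ⟨108, .mul, 0, 1, 2, 3, 5, 4⟩, ⟨-792, .mul, 0, 1, 2, 4, 5, 3⟩,
   ⟨114, .mul, 0, 1, 3, 2, 4, 5⟩, ⟨330, .mul, 0, 1, 3, 4, 5, 2⟩, ⟨-258, .mul, 0, 1, 4, 2, 3, 5⟩,
   ⟨-150, .mul, 0, 1, 4, 3, 5, 2⟩, ⟨168, .mul, 0, 1, 5, 2, 3, 4⟩, ⟨-24, .mul, 0, 1, 5, 2, 4, 3⟩,
   ⟨-198, .mul, 0, 1, 5, 3, 4, 2⟩, ⟨-66, .mul, 0, 2, 3, 1, 4, 5⟩, ⟨-48, .mul, 0, 2, 3, 1, 5, 4⟩,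
   ⟨-282, .mul, 0, 2, 3, 4, 5, 1⟩, ⟨108, .mul, 0, 2, 4, 1, 3, 5⟩, ⟨150, .mul, 0, 2, 4, 1, 5, 3⟩,
   ⟨-366, .mul, 0, 2, 5, 1, 3, 4⟩, ⟨222, .mul, 0, 2, 5, 1, 4, 3⟩, ⟨108, .mul, 0, 3, 4, 1, 2, 5⟩,
   ⟨48, .mul, 0, 3, 4, 1, 5, 2⟩, ⟨-48, .mul, 0, 3, 4, 2, 5, 1⟩, ⟨150, .mul, 0, 3, 5, 1, 2, 4⟩,
   ⟨-138, .mul, 0, 4, 5, 1, 2, 3⟩, ⟨132, .mul, 0, 4, 5, 1, 3, 2⟩,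
   ⟨-132, .mul, 0, 4, 5, 2, 3, 1⟩, ⟨168, .mul, 1, 2, 3, 0, 4, 5⟩, ⟨-54, .mul, 1, 2, 3, 0, 5, 4⟩,
   ⟨384, .mul, 1, 2, 3, 4, 5, 0⟩, ⟨-198, .mul, 1, 2, 4, 0, 3, 5⟩, ⟨-60, .mul, 1, 2, 4, 0, 5, 3⟩,
   ⟨-90, .mul, 1, 2, 4, 3, 5, 0⟩, ⟨174, .mul, 1, 2, 5, 0, 3, 4⟩, ⟨-30, .mul, 1, 2, 5, 0, 4, 3⟩,
   ⟨-192, .mul, 1, 2, 5, 3, 4, 0⟩, ⟨-300, .mul, 1, 3, 4, 0, 2, 5⟩,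
   ⟨144, .mul, 1, 3, 4, 0, 5, 2⟩, ⟨-144, .mul, 1, 3, 4, 2, 5, 0⟩,
   ⟨-240, .mul, 1, 3, 5, 0, 2, 4⟩, ⟨90, .mul, 1, 3, 5, 0, 4, 2⟩, ⟨-90, .mul, 1, 3, 5, 2, 4, 0⟩,
   ⟨240, .mul, 1, 4, 5, 0, 2, 3⟩, ⟨-234, .mul, 1, 4, 5, 0, 3, 2⟩, ⟨234, .mul, 1, 4, 5, 2, 3, 0⟩,
   ⟨102, .mul, 2, 3, 4, 0, 1, 5⟩, ⟨54, .mul, 2, 3, 4, 0, 5, 1⟩, ⟨-54, .mul, 2, 3, 4, 1, 5, 0⟩,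
   ⟨90, .mul, 2, 3, 5, 0, 1, 4⟩, ⟨60, .mul, 2, 3, 5, 0, 4, 1⟩, ⟨-60, .mul, 2, 3, 5, 1, 4, 0⟩,
   ⟨-192, .mul, 2, 4, 5, 0, 1, 3⟩, ⟨186, .mul, 2, 4, 5, 0, 3, 1⟩,
   ⟨-186, .mul, 2, 4, 5, 1, 3, 0⟩, ⟨-180, .mul, 3, 4, 5, 0, 1, 2⟩,
   ⟨180, .mul, 3, 4, 5, 0, 2, 1⟩, ⟨-180, .mul, 3, 4, 5, 1, 2, 0⟩,
   ⟨-65, .right, 0, 1, 2, 3, 4, 5⟩, ⟨29, .right, 0, 1, 2, 4, 3, 5⟩,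
   ⟨52, .right, 0, 1, 2, 5, 3, 4⟩, ⟨233, .right, 0, 1, 3, 2, 4, 5⟩,
   ⟨8, .right, 0, 1, 3, 4, 2, 5⟩, ⟨19, .right, 0, 1, 3, 5, 2, 4⟩,
   ⟨-29, .right, 0, 1, 4, 2, 3, 5⟩, ⟨-8, .right, 0, 1, 4, 3, 2, 5⟩,
   ⟨-31, .right, 0, 1, 4, 5, 2, 3⟩, ⟨-52, .right, 0, 1, 5, 2, 3, 4⟩,
   ⟨-19, .right, 0, 1, 5, 3, 2, 4⟩, ⟨31, .right, 0, 1, 5, 4, 2, 3⟩,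
   ⟨-233, .right, 0, 2, 3, 1, 4, 5⟩, ⟨-8, .right, 0, 2, 3, 4, 1, 5⟩,
   ⟨-19, .right, 0, 2, 3, 5, 1, 4⟩, ⟨29, .right, 0, 2, 4, 1, 3, 5⟩,
   ⟨8, .right, 0, 2, 4, 3, 1, 5⟩, ⟨31, .right, 0, 2, 4, 5, 1, 3⟩,
   ⟨52, .right, 0, 2, 5, 1, 3, 4⟩, ⟨19, .right, 0, 2, 5, 3, 1, 4⟩,
   ⟨-31, .right, 0, 2, 5, 4, 1, 3⟩, ⟨8, .right, 0, 3, 4, 1, 2, 5⟩,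
   ⟨-8, .right, 0, 3, 4, 2, 1, 5⟩, ⟨19, .right, 0, 3, 5, 1, 2, 4⟩,
   ⟨-19, .right, 0, 3, 5, 2, 1, 4⟩, ⟨-73, .right, 0, 4, 5, 1, 2, 3⟩,
   ⟨73, .right, 0, 4, 5, 2, 1, 3⟩, ⟨233, .right, 1, 2, 3, 0, 4, 5⟩,
   ⟨8, .right, 1, 2, 3, 4, 0, 5⟩, ⟨19, .right, 1, 2, 3, 5, 0, 4⟩,
   ⟨-29, .right, 1, 2, 4, 0, 3, 5⟩, ⟨-8, .right, 1, 2, 4, 3, 0, 5⟩,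
   ⟨-31, .right, 1, 2, 4, 5, 0, 3⟩, ⟨-52, .right, 1, 2, 5, 0, 3, 4⟩,
   ⟨-19, .right, 1, 2, 5, 3, 0, 4⟩, ⟨31, .right, 1, 2, 5, 4, 0, 3⟩,
   ⟨-8, .right, 1, 3, 4, 0, 2, 5⟩, ⟨8, .right, 1, 3, 4, 2, 0, 5⟩,
   ⟨-19, .right, 1, 3, 5, 0, 2, 4⟩, ⟨19, .right, 1, 3, 5, 2, 0, 4⟩,
   ⟨73, .right, 1, 4, 5, 0, 2, 3⟩, ⟨-73, .right, 1, 4, 5, 2, 0, 3⟩,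
   ⟨8, .right, 2, 3, 4, 0, 1, 5⟩, ⟨-8, .right, 2, 3, 4, 1, 0, 5⟩,
   ⟨19, .right, 2, 3, 5, 0, 1, 4⟩, ⟨-19, .right, 2, 3, 5, 1, 0, 4⟩,
   ⟨-73, .right, 2, 4, 5, 0, 1, 3⟩, ⟨73, .right, 2, 4, 5, 1, 0, 3⟩,
   ⟨18144, .skew, 0, 1, 2, 3, 4, 5⟩, ⟨6480, .skew, 0, 1, 3, 2, 4, 5⟩,
   ⟨1296, .skew, 0, 1, 4, 2, 3, 5⟩, ⟨-5184, .skew, 0, 1, 5, 2, 3, 4⟩,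
   ⟨-6480, .skew, 0, 2, 3, 1, 4, 5⟩, ⟨-1296, .skew, 0, 2, 4, 1, 3, 5⟩,
   ⟨5184, .skew, 0, 2, 5, 1, 3, 4⟩, ⟨5184, .skew, 0, 3, 4, 1, 2, 5⟩,
   ⟨-1296, .skew, 0, 3, 5, 1, 2, 4⟩, ⟨-6480, .skew, 0, 4, 5, 1, 2, 3⟩,
   ⟨6480, .skew, 1, 2, 3, 0, 4, 5⟩, ⟨1296, .skew, 1, 2, 4, 0, 3, 5⟩,
   ⟨-5184, .skew, 1, 2, 5, 0, 3, 4⟩, ⟨-5184, .skew, 1, 3, 4, 0, 2, 5⟩,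
   ⟨1296, .skew, 1, 3, 5, 0, 2, 4⟩, ⟨6480, .skew, 1, 4, 5, 0, 2, 3⟩,
   ⟨5184, .skew, 2, 3, 4, 0, 1, 5⟩, ⟨-1296, .skew, 2, 3, 5, 0, 1, 4⟩,
   ⟨-6480, .skew, 2, 4, 5, 0, 1, 3⟩, ⟨18144, .sym, 0, 1, 2, 3, 4, 5⟩,
   ⟨-12096, .sym, 0, 1, 3, 2, 4, 5⟩, ⟨12096, .sym, 0, 1, 4, 2, 3, 5⟩,
   ⟨12096, .sym, 0, 2, 3, 1, 4, 5⟩, ⟨-12096, .sym, 0, 2, 4, 1, 3, 5⟩,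
   ⟨-12096, .sym, 1, 2, 3, 0, 4, 5⟩, ⟨12096, .sym, 1, 2, 4, 0, 3, 5⟩]

/-- The remainder of the certificate after cancellation. -/
def certificateSum : List (ℤ × JacWord) :=
  (mergeRounds 8 ([(-108864, ⟨var 0, var 1, var 2, [var 3, var 4, var 5]⟩)] ::
    certificate.map fun r => scale r.coef (normalize r.words))).flatten

/-- All coefficients vanish, except at negligible words. -/
def JacWord.allNegligible (l : List (ℤ × JacWord)) : Bool :=
  l.all fun p => match p.1 with
    | .ofNat 0 => true
    | _ => p.2.isNegligible

set_option maxRecDepth 100000 in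
theorem certificate_check : certificate.all RelTerm.admissible = true ∧
    allNegligible certificateSum = true := by
  decide +kernel

namespace JacWord

section Soundness

variable {Z V : Type*} [NonUnitalNonAssocRing Z] [AddCommGroup V] (z : ℕ → Z) (π : Z →+ V)

theorem sumVal_cons (p : ℤ × JacWord) (l : List (ℤ × JacWord)) :
    sumVal z π (p :: l) = p.1 • val z π p.2 + sumVal z π l := by
  simp [sumVal]

/-- A combination of words with the same number of multiplications. -/
theorem sumVal_eq_of_nodes {N : ℕ} : ∀ l : List (ℤ × JacWord), (∀ p ∈ l, p.2.nodes = N) →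
    sumVal z π l = (12 ^ N : ℤ) • π ((l.map fun p => p.1 • eval z p.2).sum)
  | [], _ => by simp [sumVal]
  | p :: l, h => by
    rw [sumVal_cons, sumVal_eq_of_nodes l fun q hq => h q (List.mem_cons_of_mem _ hq), val,
      h p List.mem_cons_self, List.map_cons, List.sum_cons, map_add, map_zsmul]
    module

theorem sumVal_expandMul (h : IsMalcev Z) (a b c d e : Mono) (ts : List Mono) :
    sumVal z π (expandMul a b c d e ts) = val z π ⟨a, b, c, mul d e :: ts⟩ := by
  rw [sumVal_eq_of_nodes z π (N := a.nodes + b.nodes + c.nodes + d.nodes + e.nodes +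
    (ts.map Mono.nodes).sum)]
  · have hn : (⟨a, b, c, mul d e :: ts⟩ : JacWord).nodes = a.nodes + b.nodes + c.nodes + d.nodes +
        e.nodes + (ts.map Mono.nodes).sum + 1 := by
      simp only [nodes, Mono.nodes, List.map_cons, List.sum_cons]; omega
    rw [val, hn, pow_succ, mul_smul, ← map_zsmul π]
    simp only [expandMul, eval, rightMul, List.map_cons, List.map_nil, List.sum_cons, List.sum_nil,
      AddMonoidHom.comp_apply, AddMonoidHom.mulRight_apply, Mono.eval]
    simp only [← map_zsmul, ← map_add, add_zero]
    congr 4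
    linear_combination (norm := module)
      -h.twelve_jac_mul_mul (a.eval z) (b.eval z) (c.eval z) (d.eval z) (e.eval z)
  · simp only [expandMul, List.forall_mem_cons, nodes, List.map_cons, List.sum_cons]
    refine ⟨?_, ?_, ?_, ?_, ?_, ?_, ?_, ?_, ?_, ?_, ?_, ?_, ?_, ?_, ?_, ?_, ?_, ?_, ?_, ?_, ?_⟩
    iterate 20 omega
    simp

theorem sumVal_expandJac (h : IsMalcev Z) (a b c d : Mono) (ts : List Mono) :
    sumVal z π (expandJac a b c d ts) = val z π ⟨mul a b, c, d, ts⟩ := by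
  rw [sumVal_eq_of_nodes z π (N := a.nodes + b.nodes + c.nodes + d.nodes +
    (ts.map Mono.nodes).sum)]
  · have hn : (⟨mul a b, c, d, ts⟩ : JacWord).nodes = a.nodes + b.nodes + c.nodes + d.nodes +
        (ts.map Mono.nodes).sum + 1 := by
      simp only [nodes, Mono.nodes]; omega
    rw [val, hn, pow_succ, mul_smul, ← map_zsmul π]
    simp only [expandJac, eval, rightMul, List.map_cons, List.map_nil, List.sum_cons, List.sum_nil,
      AddMonoidHom.comp_apply, AddMonoidHom.mulRight_apply, Mono.eval]
    simp only [← map_zsmul, ← map_add, add_zero]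
    congr 4
    linear_combination (norm := module)
      -(4 : ℤ) • h.three_jac_mul (a.eval z) (b.eval z) (c.eval z) (d.eval z)
  · simp only [expandJac, List.forall_mem_cons, nodes, List.map_cons, List.sum_cons]
    refine ⟨?_, ?_, ?_, ?_, ?_⟩
    iterate 4 omega
    simp

theorem val_rotate (a b c : Mono) (ts : List Mono) :
    val z π ⟨a, b, c, ts⟩ = val z π ⟨b, c, a, ts⟩ := by
  simp only [val, eval, nodes, jac_rotate (a.eval z)]
  congr 2; omega

theorem val_swap (h : IsMalcev Z) (a b c : Mono) (ts : List Mono) :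
    val z π ⟨a, b, c, ts⟩ = -val z π ⟨b, a, c, ts⟩ := by
  simp only [val, eval, nodes, h.jac_swap_left (b.eval z) (a.eval z), map_neg, smul_neg]
  congr 3; omega

theorem sumVal_step (h : IsMalcev Z) (w : JacWord) : sumVal z π (step w) = val z π w := by
  unfold step
  split
  · exact sumVal_expandJac z π h ..
  · rw [sumVal_expandJac z π h, ← val_rotate]
  · rw [sumVal_expandJac z π h, val_rotate]
  · exact sumVal_expandMul z π h ..
  · simp [sumVal]

theorem val_sortJac (h : IsMalcev Z) (i j k : ℕ) (ts : List Mono) :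
    (sortJac i j k ts).1 • val z π (sortJac i j k ts).2 =
      val z π ⟨var i, var j, var k, ts⟩ := by
  unfold sortJac
  rcases Bool.eq_false_or_eq_true (Nat.ble i j) with h1 | h1 <;>
  rcases Bool.eq_false_or_eq_true (Nat.ble j k) with h2 | h2 <;>
  rcases Bool.eq_false_or_eq_true (Nat.ble i k) with h3 | h3 <;>
  simp only [h1, h2, h3, cond_true, cond_false, one_smul, neg_smul]
  · rw [val_rotate, val_swap z π h, neg_neg, val_rotate, val_rotate]
  · exact val_rotate ..
  · rw [val_swap z π h, neg_neg]
  · exact (val_rotate ..).symm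
  · rw [val_swap z π h, neg_neg]
  · rw [val_swap z π h, neg_neg, val_rotate, val_rotate]

theorem val_sort (h : IsMalcev Z) (w : JacWord) : (sort w).1 • val z π (sort w).2 = val z π w := by
  unfold sort
  split
  · next i j k d e f =>
    rcases Bool.eq_false_or_eq_true (Nat.ble e f) with h1 | h1 <;>
    simp only [h1, cond_true, cond_false]
    · exact val_sortJac z π h ..
    · rw [mul_smul, val_sortJac z π h, neg_smul, one_smul]
      simp only [val, nodes, eval, rightMul, AddMonoidHom.comp_apply, AddMonoidHom.mulRight_apply,
        Mono.eval, h.anticomm (z e) (z f), mul_neg, map_neg, smul_neg, neg_neg, List.map_cons,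
        Mono.nodes]
  · exact val_sortJac z π h ..
  · exact one_smul _ _

theorem sumVal_merge : ∀ (n : ℕ) (l l' : List (ℤ × JacWord)),
    sumVal z π (merge n l l') = sumVal z π l + sumVal z π l'
  | 0, l, l' => sumVal_append z π l l'
  | _ + 1, [], l' => by simp [merge, sumVal]
  | _ + 1, p :: l, [] => by simp [merge, sumVal]
  | n + 1, p :: l, q :: l' => by
    rw [merge]
    rcases Bool.eq_false_or_eq_true (Nat.beq p.2.key q.2.key && beq p.2 q.2) with h1 | h1
    · have hpq : p.2 = q.2 := eq_of_beq (by simp only [Bool.and_eq_true] at h1; exact h1.2)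
      simp only [h1, cond_true, sumVal_cons, sumVal_merge n, add_smul]
      rw [hpq]
      abel
    · rcases Bool.eq_false_or_eq_true (Nat.ble p.2.key q.2.key) with h2 | h2 <;>
      · simp only [h1, h2, cond_true, cond_false, sumVal_cons, sumVal_merge n]
        abel

theorem sumVal_mergePairs : ∀ ls : List (List (ℤ × JacWord)),
    ((mergePairs ls).map (sumVal z π)).sum = (ls.map (sumVal z π)).sum
  | [] => rfl
  | [_] => rfl
  | l :: l' :: ls => by
    simp only [mergePairs, List.map_cons, List.sum_cons, sumVal_merge, sumVal_mergePairs ls,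
      add_assoc]

theorem sumVal_mergeRounds : ∀ (n : ℕ) (ls : List (List (ℤ × JacWord))),
    sumVal z π (mergeRounds n ls).flatten = (ls.map (sumVal z π)).sum
  | 0, [] => rfl
  | 0, l :: ls => by
    rw [mergeRounds, List.flatten_cons, sumVal_append, List.map_cons, List.sum_cons,
      ← sumVal_mergeRounds 0 ls, mergeRounds]
  | n + 1, ls => by rw [mergeRounds, sumVal_mergeRounds n, sumVal_mergePairs]

theorem sumVal_normalize (h : IsMalcev Z) (l : List (ℤ × JacWord)) :
    sumVal z π (normalize l) = sumVal z π l := by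
  rw [normalize, sumVal_mergeRounds, List.map_map]
  have h1 : (sumVal z π ∘ fun p => [sortEntry p]) = fun p : ℤ × JacWord => p.1 • val z π p.2 := by
    funext p
    simp only [Function.comp_apply, sumVal, List.map_cons, List.map_nil, List.sum_cons,
      List.sum_nil, add_zero, sortEntry, mul_smul, val_sort z π h]
  rw [h1]
  change sumVal z π _ = _
  induction l with
  | nil => rfl
  | cons p l ih =>
    rw [List.flatMap_cons, sumVal_append, ih, sumVal_scale, sumVal_step z π h, sumVal_cons]

end Soundness

end JacWord

section Sums

variable {Z : Type*} [NonUnitalNonAssocRing Z]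

/-- The sum of `x d e f` over all orders of `d, e, f`. -/
def symSum (x d e f : Z) : Z :=
  x * d * e * f + x * d * f * e + x * e * d * f + x * e * f * d + x * f * d * e + x * f * e * d

/-- The alternating sum of `x d e f` over all orders of `d, e, f`. -/
def skewSum (x d e f : Z) : Z :=
  x * d * e * f - x * d * f * e - x * e * d * f + x * e * f * d + x * f * d * e - x * f * e * d

end Sums

/-- An additive map `π` kills the symmetric sums, the alternating sums and the products
`J(a, b, c)((de)f)` in six distinct variables. -/
structure KillsGenerators {Z V : Type*} [NonUnitalNonAssocRing Z] [AddCommGroup V] (z : ℕ → Z)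
    (π : Z →+ V) : Prop where
  sym : ∀ a b c d e f, IsPerm a b c d e f →
    π (symSum (jac (z a) (z b) (z c)) (z d) (z e) (z f)) = 0
  skew : ∀ a b c d e f, IsPerm a b c d e f →
    π (skewSum (jac (z a) (z b) (z c)) (z d) (z e) (z f)) = 0
  mul : ∀ a b c d e f, IsPerm a b c d e f →
    π (jac (z a) (z b) (z c) * (z d * z e * z f)) = 0

namespace JacWord

variable {Z V : Type*} [NonUnitalNonAssocRing Z] [AddCommGroup V] (z : ℕ → Z) (π : Z →+ V)

theorem sumVal_words (h : IsMalcev Z) (hπ : KillsGenerators z π) (r : RelTerm)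
    (hr : r.admissible = true) : sumVal z π r.words = 0 := by
  obtain ⟨n, k, a, b, c, d, e, f⟩ := r
  cases k
  · simp only [RelTerm.words, sumVal_cons, sumVal_expandMul z π h]
    module
  · simp only [RelTerm.words, sumVal_cons, sumVal_expandMul z π h]
    module
  · have key := congrArg π (h.three_right_mul (jac (z a) (z b) (z c)) (z d) (z e) (z f))
    simp only [RelTerm.words, sumVal, val, eval, nodes, Mono.nodes, Mono.eval, rightMul,
      List.map_cons, List.map_nil, List.sum_cons, List.sum_nil, AddMonoidHom.comp_apply,
      AddMonoidHom.mulRight_apply, AddMonoidHom.id_apply]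
    rw [show jac (z d) (z e) (z f) = z d * z e * z f + z e * z f * z d + z f * z d * z e
      from rfl] at key
    simp only [mul_add, sub_mul, map_add, map_sub, map_zsmul] at key
    linear_combination (norm := module) -(144 : ℤ) • key
  · have key := hπ.sym a b c d e f (of_decide_eq_true hr)
    simp only [symSum, map_add] at key
    simp only [RelTerm.words, sumVal, val, eval, nodes, Mono.nodes, Mono.eval, rightMul,
      List.map_cons, List.map_nil, List.sum_cons, List.sum_nil, AddMonoidHom.comp_apply,
      AddMonoidHom.mulRight_apply, AddMonoidHom.id_apply]
    linear_combination (norm := module) key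
  · have key := hπ.skew a b c d e f (of_decide_eq_true hr)
    simp only [skewSum, map_add, map_sub] at key
    simp only [RelTerm.words, sumVal, val, eval, nodes, Mono.nodes, Mono.eval, rightMul,
      List.map_cons, List.map_nil, List.sum_cons, List.sum_nil, AddMonoidHom.comp_apply,
      AddMonoidHom.mulRight_apply, AddMonoidHom.id_apply]
    linear_combination (norm := module) key

theorem val_of_isNegligible (h : IsMalcev Z) (hπ : KillsGenerators z π) (w : JacWord)
    (hw : w.isNegligible = true) : val z π w = 0 := by
  unfold isNegligible at hw
  split at hw
  · have key := hπ.mul _ _ _ _ _ _ (of_decide_eq_true hw)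
    rw [val, eval]
    exact (congrArg _ key).trans (smul_zero _)
  · next a b c f d e =>
    have key := hπ.mul _ _ _ _ _ _ (of_decide_eq_true hw)
    rw [h.anticomm (z f), mul_neg, map_neg, neg_eq_zero] at key
    rw [val, eval]
    exact (congrArg _ key).trans (smul_zero _)
  · cases hw

theorem sumVal_of_allNegligible (h : IsMalcev Z) (hπ : KillsGenerators z π) :
    ∀ l : List (ℤ × JacWord), allNegligible l = true → sumVal z π l = 0
  | [], _ => rfl
  | (n, w) :: l, hl => by
    simp only [allNegligible, List.all_cons, Bool.and_eq_true] at hl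
    rw [sumVal_cons, sumVal_of_allNegligible h hπ l hl.2, add_zero]
    have := hl.1
    split at this
    · exact zero_smul ℤ _
    · rw [val_of_isNegligible z π h hπ w this, smul_zero]

theorem kills_word (h : IsMalcev Z) (hπ : KillsGenerators z π) :
    (108864 : ℤ) • π (jac (z 0) (z 1) (z 2) * z 3 * z 4 * z 5) = 0 := by
  have h0 := sumVal_of_allNegligible z π h hπ _ certificate_check.2
  rw [certificateSum, sumVal_mergeRounds, List.map_cons, List.sum_cons, List.map_map,
    List.sum_eq_zero, add_zero] at h0
  · have h1 : sumVal z π [(-108864, ⟨var 0, var 1, var 2, [var 3, var 4, var 5]⟩)] =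
        (-108864 : ℤ) • π (jac (z 0) (z 1) (z 2) * z 3 * z 4 * z 5) := by
      simp only [sumVal, val, eval, nodes, Mono.nodes, Mono.eval, rightMul,
        List.map_cons, List.map_nil, List.sum_cons, List.sum_nil, AddMonoidHom.comp_apply,
        AddMonoidHom.mulRight_apply, AddMonoidHom.id_apply]
      module
    rw [h1, neg_smul, neg_eq_zero] at h0
    exact h0
  · simp only [List.mem_map, Function.comp_apply]
    rintro _ ⟨r, hr, rfl⟩
    rw [sumVal_scale, sumVal_normalize z π h, sumVal_words z π h hπ r
      (List.all_eq_true.1 certificate_check.1 r hr), smul_zero]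

end JacWord

namespace BTree

/-- Every monomial contains a variable. -/
theorem card_vars_pos {n : ℕ} : ∀ t : BTree n, 0 < t.vars.card
  | leaf _ => by simp [vars]
  | node s t => by
    rw [vars, Multiset.card_add]
    exact Nat.add_pos_left (card_vars_pos s) _

theorem eq_leaf_of_card {n : ℕ} : ∀ {t : BTree n}, t.vars.card = 1 → ∃ i, t = leaf i
  | leaf i, _ => ⟨i, rfl⟩
  | node s t, h => by
    rw [vars, Multiset.card_add] at h
    have := s.card_vars_pos
    have := t.card_vars_pos
    omega

theorem eq_node_of_card {n k : ℕ} : ∀ {t : BTree n}, t.vars.card = k + 2 →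
    ∃ s s', t = node s s' ∧ s.vars.card + s'.vars.card = k + 2
  | leaf i, h => by simp [vars] at h
  | node s s', h => ⟨s, s', rfl, by rwa [vars, Multiset.card_add] at h⟩

end BTree

section Spanning

open BTree

variable {K Z : Type} [Field K] [NonUnitalNonAssocRing Z] [Module K Z]
  (z : Fin 6 → Z)

/-- The value of a monomial in an algebra. -/
abbrev treeEval (t : BTree 6) : Z := t.eval (fun a b => a * b) z

theorem mem_of_zsmul_mem [CharZero K] {S : Submodule K Z} {x : Z} (n : ℤ) (hn : n ≠ 0)
    (h : n • x ∈ S) : x ∈ S := by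
  rw [← Int.cast_smul_eq_zsmul K] at h
  exact (S.smul_mem_iff (Int.cast_ne_zero.2 hn)).1 h

variable [IsScalarTower K Z Z]

variable (K) in
/-- Right multiplication by the values of a list of monomials. -/
def mulTrees : List (BTree 6) → Z →ₗ[K] Z
  | [] => LinearMap.id
  | t :: ts => (mulTrees ts).comp (LinearMap.mulRight K (treeEval z t))

theorem mulTrees_cons (t : BTree 6) (ts : List (BTree 6)) (x : Z) :
    mulTrees K z (t :: ts) x = mulTrees K z ts (x * treeEval z t) := rfl

/-- A submodule that contains the values of all products of the Jacobian of three variables with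
the three other variables. -/
structure ContainsJacobians (S : Submodule K Z) : Prop where
  one_one_one : ∀ a b c d e f : Fin 6, [a, b, c, d, e, f].Nodup →
    jac (z a) (z b) (z c) * z d * z e * z f ∈ S
  one_two : ∀ a b c d e f : Fin 6, [a, b, c, d, e, f].Nodup →
    jac (z a) (z b) (z c) * z d * (z e * z f) ∈ S
  two_one : ∀ a b c d e f : Fin 6, [a, b, c, d, e, f].Nodup →
    jac (z a) (z b) (z c) * (z d * z e) * z f ∈ S
  three : ∀ a b c d e f : Fin 6, [a, b, c, d, e, f].Nodup →
    jac (z a) (z b) (z c) * (z d * z e * z f) ∈ S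

variable {z}

theorem nodup_of_eq_univ {l : List (Fin 6)}
    (h : (l : Multiset (Fin 6)) = (Finset.univ : Finset (Fin 6)).val) : l.Nodup := by
  rw [← Multiset.coe_nodup, h]
  exact Finset.univ.nodup

theorem mulTrees_jac_leaf_mem (hZ : IsMalcev Z) {S : Submodule K Z} (hS : ContainsJacobians z S)
    (a b c : Fin 6) (ts : List (BTree 6))
    (h : {a} + {b} + {c} + (ts.map vars).sum = (Finset.univ : Finset (Fin 6)).val) :
    mulTrees K z ts (jac (z a) (z b) (z c)) ∈ S := by
  have hcard := congrArg Multiset.card h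
  match ts with
  | [] => simp at hcard
  | [t] =>
    simp only [List.map_cons, List.map_nil, List.sum_cons, List.sum_nil, add_zero,
      Multiset.card_add, Multiset.card_singleton, Finset.card_val, Finset.card_univ,
      Fintype.card_fin] at hcard
    obtain ⟨s, s', rfl, h2⟩ := eq_node_of_card (k := 1) (show t.vars.card = _ by omega)
    have := s.card_vars_pos
    have := s'.card_vars_pos
    rcases (by omega : s.vars.card = 1 ∨ s'.vars.card = 1) with h3 | h3
    · obtain ⟨f, rfl⟩ := eq_leaf_of_card h3
      obtain ⟨u, u', rfl, h4⟩ := eq_node_of_card (k := 0) (show s'.vars.card = _ by omega)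
      have := u.card_vars_pos
      have := u'.card_vars_pos
      obtain ⟨d, rfl⟩ := eq_leaf_of_card (show u.vars.card = 1 by omega)
      obtain ⟨e, rfl⟩ := eq_leaf_of_card (show u'.vars.card = 1 by omega)
      have := hS.three a b c d e f (nodup_of_eq_univ (by
        rw [← h]
        simp only [vars, List.map_cons, List.map_nil, List.sum_cons, List.sum_nil,
          ← Multiset.singleton_add, ← Multiset.cons_coe, Multiset.coe_nil]
        abel))
      rw [hZ.anticomm (z f), mul_neg, neg_mem_iff] at this
      exact this
    · obtain ⟨f, rfl⟩ := eq_leaf_of_card h3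
      obtain ⟨u, u', rfl, h4⟩ := eq_node_of_card (k := 0) (show s.vars.card = _ by omega)
      have := u.card_vars_pos
      have := u'.card_vars_pos
      obtain ⟨d, rfl⟩ := eq_leaf_of_card (show u.vars.card = 1 by omega)
      obtain ⟨e, rfl⟩ := eq_leaf_of_card (show u'.vars.card = 1 by omega)
      exact hS.three a b c d e f (nodup_of_eq_univ (by
        rw [← h]
        simp only [vars, List.map_cons, List.map_nil, List.sum_cons, List.sum_nil,
          ← Multiset.singleton_add, ← Multiset.cons_coe, Multiset.coe_nil]
        abel))
  | [s, s'] =>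
    simp only [List.map_cons, List.map_nil, List.sum_cons, List.sum_nil, add_zero,
      Multiset.card_add, Multiset.card_singleton, Finset.card_val, Finset.card_univ,
      Fintype.card_fin] at hcard
    have := s.card_vars_pos
    have := s'.card_vars_pos
    rcases (by omega : s.vars.card = 1 ∨ s'.vars.card = 1) with h3 | h3
    · obtain ⟨d, rfl⟩ := eq_leaf_of_card h3
      obtain ⟨u, u', rfl, h4⟩ := eq_node_of_card (k := 0) (show s'.vars.card = _ by omega)
      have := u.card_vars_pos
      have := u'.card_vars_pos
      obtain ⟨e, rfl⟩ := eq_leaf_of_card (show u.vars.card = 1 by omega)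
      obtain ⟨f, rfl⟩ := eq_leaf_of_card (show u'.vars.card = 1 by omega)
      exact hS.one_two a b c d e f (nodup_of_eq_univ (by
        rw [← h]
        simp only [vars, List.map_cons, List.map_nil, List.sum_cons, List.sum_nil,
          ← Multiset.singleton_add, ← Multiset.cons_coe, Multiset.coe_nil]
        abel))
    · obtain ⟨f, rfl⟩ := eq_leaf_of_card h3
      obtain ⟨u, u', rfl, h4⟩ := eq_node_of_card (k := 0) (show s.vars.card = _ by omega)
      have := u.card_vars_pos
      have := u'.card_vars_pos
      obtain ⟨d, rfl⟩ := eq_leaf_of_card (show u.vars.card = 1 by omega)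
      obtain ⟨e, rfl⟩ := eq_leaf_of_card (show u'.vars.card = 1 by omega)
      exact hS.two_one a b c d e f (nodup_of_eq_univ (by
        rw [← h]
        simp only [vars, List.map_cons, List.map_nil, List.sum_cons, List.sum_nil,
          ← Multiset.singleton_add, ← Multiset.cons_coe, Multiset.coe_nil]
        abel))
  | [s, s', s''] =>
    simp only [List.map_cons, List.map_nil, List.sum_cons, List.sum_nil, add_zero,
      Multiset.card_add, Multiset.card_singleton, Finset.card_val, Finset.card_univ,
      Fintype.card_fin] at hcard
    have := s.card_vars_pos
    have := s'.card_vars_pos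
    have := s''.card_vars_pos
    obtain ⟨d, rfl⟩ := eq_leaf_of_card (show s.vars.card = 1 by omega)
    obtain ⟨e, rfl⟩ := eq_leaf_of_card (show s'.vars.card = 1 by omega)
    obtain ⟨f, rfl⟩ := eq_leaf_of_card (show s''.vars.card = 1 by omega)
    exact hS.one_one_one a b c d e f (nodup_of_eq_univ (by
      rw [← h]
      simp only [vars, List.map_cons, List.map_nil, List.sum_cons, List.sum_nil,
        ← Multiset.singleton_add, ← Multiset.cons_coe, Multiset.coe_nil]
      abel))
  | s₁ :: s₂ :: s₃ :: s₄ :: _ =>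
    simp only [List.map_cons, List.sum_cons, Multiset.card_add, Multiset.card_singleton,
      Finset.card_val, Finset.card_univ, Fintype.card_fin] at hcard
    have := s₁.card_vars_pos
    have := s₂.card_vars_pos
    have := s₃.card_vars_pos
    have := s₄.card_vars_pos
    omega

theorem mulTrees_jac_mul_mem [CharZero K] (hZ : IsMalcev Z) {S : Submodule K Z} (a b c d : BTree 6)
    (ts : List (BTree 6))
    (h₁ : mulTrees K z (a :: ts) (jac (treeEval z b) (treeEval z c) (treeEval z d)) ∈ S)
    (h₂ : mulTrees K z (b :: ts) (jac (treeEval z a) (treeEval z c) (treeEval z d)) ∈ S)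
    (h₃ : mulTrees K z (c :: ts) (jac (treeEval z a) (treeEval z b) (treeEval z d)) ∈ S)
    (h₄ : mulTrees K z (d :: ts) (jac (treeEval z a) (treeEval z b) (treeEval z c)) ∈ S) :
    mulTrees K z ts (jac (treeEval z (node a b)) (treeEval z c) (treeEval z d)) ∈ S := by
  refine mem_of_zsmul_mem 3 (by norm_num) ?_
  rw [← map_zsmul, show treeEval z (node a b) = treeEval z a * treeEval z b from rfl,
    hZ.three_jac_mul]
  simp only [map_add, map_sub, map_zsmul]
  exact S.add_mem (S.sub_mem (S.sub_mem h₁ h₂) (S.smul_of_tower_mem (2 : ℤ) h₃))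
    (S.smul_of_tower_mem (2 : ℤ) h₄)

/-- All multilinear words that contain a Jacobian belong to `S`. -/
theorem mulTrees_jac_mem [CharZero K] (hZ : IsMalcev Z) {S : Submodule K Z}
    (hS : ContainsJacobians z S) : ∀ (s t u : BTree 6) (ts : List (BTree 6)),
    s.vars + t.vars + u.vars + (ts.map vars).sum = (Finset.univ : Finset (Fin 6)).val →
    mulTrees K z ts (jac (treeEval z s) (treeEval z t) (treeEval z u)) ∈ S
  | node a b, c, d, ts, h => by
    simp only [vars] at h
    refine mulTrees_jac_mul_mem hZ a b c d ts (mulTrees_jac_mem hZ hS _ _ _ _ ?_)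
      (mulTrees_jac_mem hZ hS _ _ _ _ ?_) (mulTrees_jac_mem hZ hS _ _ _ _ ?_)
      (mulTrees_jac_mem hZ hS _ _ _ _ ?_) <;>
    · rw [← h, List.map_cons, List.sum_cons]
      abel
  | leaf i, node a b, d, ts, h => by
    simp only [vars] at h
    rw [← jac_rotate]
    refine mulTrees_jac_mul_mem hZ a b d (leaf i) ts (mulTrees_jac_mem hZ hS _ _ _ _ ?_)
      (mulTrees_jac_mem hZ hS _ _ _ _ ?_) (mulTrees_jac_mem hZ hS _ _ _ _ ?_)
      (mulTrees_jac_mem hZ hS _ _ _ _ ?_) <;>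
    · rw [← h, List.map_cons, List.sum_cons]
      simp only [vars]
      abel
  | leaf i, leaf j, node a b, ts, h => by
    simp only [vars] at h
    rw [jac_rotate]
    refine mulTrees_jac_mul_mem hZ a b (leaf i) (leaf j) ts (mulTrees_jac_mem hZ hS _ _ _ _ ?_)
      (mulTrees_jac_mem hZ hS _ _ _ _ ?_) (mulTrees_jac_mem hZ hS _ _ _ _ ?_)
      (mulTrees_jac_mem hZ hS _ _ _ _ ?_) <;>
    · rw [← h, List.map_cons, List.sum_cons]
      simp only [vars]
      abel
  | leaf i, leaf j, leaf k, ts, h => mulTrees_jac_leaf_mem hZ hS i j k ts h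
termination_by s t u => sizeOf s + sizeOf t + sizeOf u

variable (z) in
/-- The left-normed word that starts with the variable `0`. -/
def leftNormed (l : List (Fin 5)) : Z := l.foldl (fun x i => x * z i.succ) (z 0)

/-- Multilinear words that start with a left-normed word belong to `S`. -/
theorem mulTrees_leftNormed_mem [CharZero K] (hZ : IsMalcev Z) {S : Submodule K Z}
    (hS : ContainsJacobians z S) (hW : ∀ l, leftNormed z l ∈ S) :
    ∀ (ts : List (BTree 6)) (s : BTree 6) (l : List (Fin 5)), treeEval z s = leftNormed z l →
    0 ∈ s.vars → s.vars + (ts.map vars).sum = (Finset.univ : Finset (Fin 6)).val →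
    mulTrees K z ts (treeEval z s) ∈ S
  | [], s, l, hl, _, _ => by
    rw [hl]
    exact hW l
  | leaf i :: ts, s, l, hl, hs, h => by
    have hi : i ≠ 0 := by
      rintro rfl
      have h1 : (s.vars + ((leaf 0 :: ts).map vars).sum).Nodup := h ▸ Finset.univ.nodup
      rw [List.map_cons, List.sum_cons, vars, ← add_assoc] at h1
      exact (Multiset.disjoint_left.1 (Multiset.nodup_add.1 (Multiset.nodup_add.1 h1).1).2.2 hs)
        (Multiset.mem_singleton_self 0)
    obtain ⟨j, rfl⟩ := Fin.exists_succ_eq.2 hi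
    refine mulTrees_leftNormed_mem hZ hS hW ts (node s (leaf j.succ)) (l ++ [j]) ?_ ?_ ?_
    · rw [leftNormed, List.foldl_append]
      exact congrArg (· * z j.succ) hl
    · exact Multiset.mem_add.2 (Or.inl hs)
    · simp only [← h, List.map_cons, List.sum_cons, vars, add_assoc]
  | node p q :: ts, s, l, hl, hs, h => by
    have hvars : s.vars + p.vars + q.vars + (ts.map vars).sum =
        (Finset.univ : Finset (Fin 6)).val := by
      rw [← h, List.map_cons, List.sum_cons, vars]
      abel
    have h1 := mulTrees_leftNormed_mem hZ hS hW (p :: q :: ts) s l hl hs (by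
      rw [← hvars, List.map_cons, List.map_cons, List.sum_cons, List.sum_cons]; abel)
    have h2 := mulTrees_leftNormed_mem hZ hS hW (q :: p :: ts) s l hl hs (by
      rw [← hvars, List.map_cons, List.map_cons, List.sum_cons, List.sum_cons]; abel)
    have h3 := mulTrees_jac_mem hZ hS s p q ts hvars
    have key : treeEval z s * treeEval z (node p q) = treeEval z s * treeEval z p * treeEval z q
        - treeEval z s * treeEval z q * treeEval z p
        - jac (treeEval z s) (treeEval z p) (treeEval z q) := by
      change treeEval z s * (treeEval z p * treeEval z q) = _
      rw [jac, hZ.anticomm (treeEval z s) (treeEval z p * treeEval z q),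
        hZ.anticomm (treeEval z s) (treeEval z q), neg_mul]
      abel
    rw [mulTrees_cons, key, map_sub, map_sub]
    exact S.sub_mem (S.sub_mem h1 h2) h3
termination_by ts => (ts.map sizeOf).sum
decreasing_by
  all_goals simp
  all_goals omega

/-- All multilinear words belong to `S`. -/
theorem mulTrees_mem [CharZero K] (hZ : IsMalcev Z) {S : Submodule K Z}
    (hS : ContainsJacobians z S) (hW : ∀ l, leftNormed z l ∈ S) :
    ∀ (s : BTree 6) (ts : List (BTree 6)), 0 ∈ s.vars →
    s.vars + (ts.map vars).sum = (Finset.univ : Finset (Fin 6)).val →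
    mulTrees K z ts (treeEval z s) ∈ S
  | leaf i, ts, hs, h => by
    obtain rfl : 0 = i := Multiset.mem_singleton.1 hs
    exact mulTrees_leftNormed_mem hZ hS hW ts (leaf 0) [] rfl hs h
  | node p q, ts, hs, h => by
    rcases Multiset.mem_add.1 hs with hp | hq
    · exact mulTrees_mem hZ hS hW p (q :: ts) hp (by
        rw [← h, List.map_cons, List.sum_cons, vars, add_assoc])
    · have := mulTrees_mem hZ hS hW q (p :: ts) hq (by
        rw [← h, List.map_cons, List.sum_cons, vars]; abel)
      rw [mulTrees_cons, hZ.anticomm, map_neg, neg_mem_iff] at this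
      exact this

theorem treeEval_mem [CharZero K] (hZ : IsMalcev Z) {S : Submodule K Z}
    (hS : ContainsJacobians z S) (hW : ∀ l, leftNormed z l ∈ S) (t : BTree 6)
    (ht : t.Multilinear) : treeEval z t ∈ S :=
  mulTrees_mem hZ hS hW t [] (by rw [ht]; exact Finset.mem_univ (0 : Fin 6))
    (by simpa using show t.vars = _ from ht)

end Spanning

/-- Two triples of variables. -/
structure Split where
  a : Fin 6
  b : Fin 6
  c : Fin 6
  d : Fin 6
  e : Fin 6
  f : Fin 6
  deriving DecidableEq

/-- The ordered partitions of the six variables into two increasing triples. -/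
def splits : List Split :=
  [⟨0, 1, 2, 3, 4, 5⟩, ⟨0, 1, 3, 2, 4, 5⟩, ⟨0, 1, 4, 2, 3, 5⟩, ⟨0, 1, 5, 2, 3, 4⟩,
    ⟨0, 2, 3, 1, 4, 5⟩, ⟨0, 2, 4, 1, 3, 5⟩, ⟨0, 2, 5, 1, 3, 4⟩, ⟨0, 3, 4, 1, 2, 5⟩,
    ⟨0, 3, 5, 1, 2, 4⟩, ⟨0, 4, 5, 1, 2, 3⟩, ⟨1, 2, 3, 0, 4, 5⟩, ⟨1, 2, 4, 0, 3, 5⟩,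
    ⟨1, 2, 5, 0, 3, 4⟩, ⟨1, 3, 4, 0, 2, 5⟩, ⟨1, 3, 5, 0, 2, 4⟩, ⟨1, 4, 5, 0, 2, 3⟩,
    ⟨2, 3, 4, 0, 1, 5⟩, ⟨2, 3, 5, 0, 1, 4⟩, ⟨2, 4, 5, 0, 1, 3⟩, ⟨3, 4, 5, 0, 1, 2⟩]

/-- The kinds of generators of the space of multilinear words with a Jacobian. -/
inductive GenKind : Type
  | sym
  | skew
  | left
  | mid
  | jac

/-- The generators of the space of multilinear words with a Jacobian. -/
def gens : List (GenKind × Split) :=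
  splits.map (Prod.mk .sym) ++ splits.map (Prod.mk .skew) ++ splits.map (Prod.mk .left) ++
    splits.map (Prod.mk .mid) ++ (splits.filter fun t => t.a = 0).map (Prod.mk .jac)

section Generators

variable {K Z : Type} [Field K] [NonUnitalNonAssocRing Z] [Module K Z]

/-- The value of a generator. -/
def genEval (z : Fin 6 → Z) : GenKind × Split → Z
  | (k, ⟨a, b, c, d, e, f⟩) =>
    match k with
    | .sym => symSum (jac (z a) (z b) (z c)) (z d) (z e) (z f)
    | .skew => skewSum (jac (z a) (z b) (z c)) (z d) (z e) (z f)
    | .left => jac (z a) (z b) (z c) * (z d * z e * z f)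
    | .mid => jac (z a) (z b) (z c) * (z d * z f * z e)
    | .jac => jac (z a) (z b) (z c) * jac (z d) (z e) (z f)

theorem mem_splits_of_lt : ∀ a b : Fin 6, a < b → ∀ c, b < c → ∀ d e : Fin 6, d < e → ∀ f, e < f →
    [a, b, c, d, e, f].Nodup → (⟨a, b, c, d, e, f⟩ : Split) ∈ splits := by
  decide +kernel

theorem mirror_mem_splits : ∀ t ∈ splits, t.a ≠ 0 →
    (⟨t.d, t.e, t.f, t.a, t.b, t.c⟩ : Split) ∈ splits ∧ t.d = 0 := by
  decide +kernel

/-- A relation between three variables that is invariant under permutations follows from the case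
of an increasing triple. -/
theorem of_increasing {Q : Fin 6 → Fin 6 → Fin 6 → Prop} (h₁ : ∀ a b c, Q a b c → Q b a c)
    (h₂ : ∀ a b c, Q a b c → Q a c b) (h : ∀ a b c, a < b → b < c → Q a b c) (a b c : Fin 6)
    (hab : a ≠ b) (hac : a ≠ c) (hbc : b ≠ c) : Q a b c := by
  rcases lt_or_gt_of_ne hab with h3 | h3 <;> rcases lt_or_gt_of_ne hac with h4 | h4 <;>
    rcases lt_or_gt_of_ne hbc with h5 | h5
  · exact h _ _ _ h3 h5
  · exact h₂ _ _ _ (h _ _ _ h4 h5)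
  · exact absurd (h3.trans h5) (not_lt_of_gt h4)
  · exact h₂ _ _ _ (h₁ _ _ _ (h _ _ _ h4 h3))
  · exact h₁ _ _ _ (h _ _ _ h3 h4)
  · exact absurd (h5.trans h3) (not_lt_of_gt h4)
  · exact h₁ _ _ _ (h₂ _ _ _ (h _ _ _ h5 h4))
  · exact h₁ _ _ _ (h₂ _ _ _ (h₁ _ _ _ (h _ _ _ h5 h3)))

theorem forall_of_splits {Q : Fin 6 → Fin 6 → Fin 6 → Fin 6 → Fin 6 → Fin 6 → Prop}
    (h₁ : ∀ a b c d e f, Q a b c d e f → Q b a c d e f)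
    (h₂ : ∀ a b c d e f, Q a b c d e f → Q a c b d e f)
    (h₃ : ∀ a b c d e f, Q a b c d e f → Q a b c e d f)
    (h₄ : ∀ a b c d e f, Q a b c d e f → Q a b c d f e)
    (h : ∀ t ∈ splits, Q t.a t.b t.c t.d t.e t.f) (a b c d e f : Fin 6)
    (hn : [a, b, c, d, e, f].Nodup) : Q a b c d e f := by
  have swap₁ : ∀ {a b : Fin 6} {l : List (Fin 6)}, (b :: a :: l).Nodup → (a :: b :: l).Nodup :=
    fun h => (List.Perm.swap ..).nodup_iff.1 h
  have swap₂ : ∀ {x a b : Fin 6} {l : List (Fin 6)}, (x :: b :: a :: l).Nodup →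
      (x :: a :: b :: l).Nodup := fun h => ((List.Perm.swap ..).cons _).nodup_iff.1 h
  have swap₃ : ∀ {x y w a b : Fin 6} {l : List (Fin 6)}, (x :: y :: w :: b :: a :: l).Nodup →
      (x :: y :: w :: a :: b :: l).Nodup :=
    fun h => ((((List.Perm.swap ..).cons _).cons _).cons _).nodup_iff.1 h
  have swap₄ : ∀ {x y w v a b : Fin 6} {l : List (Fin 6)}, (x :: y :: w :: v :: b :: a :: l).Nodup →
      (x :: y :: w :: v :: a :: b :: l).Nodup :=
    fun h => (((((List.Perm.swap ..).cons _).cons _).cons _).cons _).nodup_iff.1 h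
  have hn' := hn
  simp only [List.nodup_cons, List.mem_cons, not_or] at hn'
  refine of_increasing (Q := fun a b c => ∀ d e f, d ≠ e → d ≠ f → e ≠ f →
      [a, b, c, d, e, f].Nodup → Q a b c d e f)
    (fun a b c h d e f x y w hn => h₁ _ _ _ _ _ _ (h d e f x y w (swap₁ hn)))
    (fun a b c h d e f x y w hn => h₂ _ _ _ _ _ _ (h d e f x y w (swap₂ hn)))
    (fun a b c hab hbc d e f hde hdf hef => ?_) a b c hn'.1.1 hn'.1.2.1 hn'.2.1.1 d e f
    hn'.2.2.2.1.1 hn'.2.2.2.1.2.1 hn'.2.2.2.2.1.1 hn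
  exact of_increasing (Q := fun d e f => [a, b, c, d, e, f].Nodup → Q a b c d e f)
    (fun d e f h hn => h₃ _ _ _ _ _ _ (h (swap₃ hn)))
    (fun d e f h hn => h₄ _ _ _ _ _ _ (h (swap₄ hn)))
    (fun d e f hde hef hn => h ⟨a, b, c, d, e, f⟩
      (mem_splits_of_lt a b hab c hbc d e hde f hef hn)) d e f hde hdf hef

variable {z : Fin 6 → Z} {S : Submodule K Z}

theorem symSum_mem (hZ : IsMalcev Z) (hS : ∀ g ∈ gens, genEval z g ∈ S) :
    ∀ a b c d e f : Fin 6, [a, b, c, d, e, f].Nodup →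
      symSum (jac (z a) (z b) (z c)) (z d) (z e) (z f) ∈ S := by
  have neg : ∀ x d e f : Z, symSum (-x) d e f = -symSum x d e f := fun x d e f => by
    simp only [symSum, neg_mul]; abel
  refine forall_of_splits (fun a b c d e f h => ?_) (fun a b c d e f h => ?_)
    (fun a b c d e f h => ?_) (fun a b c d e f h => ?_) fun t ht => ?_
  · rwa [hZ.jac_swap_left, neg, neg_mem_iff]
  · rwa [hZ.jac_swap_right, neg, neg_mem_iff]
  · convert h using 1
    simp only [symSum]; abel
  · convert h using 1
    simp only [symSum]; abel
  · exact hS (.sym, t) (by simp [gens, ht])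

theorem skewSum_mem (hZ : IsMalcev Z) (hS : ∀ g ∈ gens, genEval z g ∈ S) :
    ∀ a b c d e f : Fin 6, [a, b, c, d, e, f].Nodup →
      skewSum (jac (z a) (z b) (z c)) (z d) (z e) (z f) ∈ S := by
  have neg : ∀ x d e f : Z, skewSum (-x) d e f = -skewSum x d e f := fun x d e f => by
    simp only [skewSum, neg_mul]; abel
  refine forall_of_splits (fun a b c d e f h => ?_) (fun a b c d e f h => ?_)
    (fun a b c d e f h => ?_) (fun a b c d e f h => ?_) fun t ht => ?_
  · rwa [hZ.jac_swap_left, neg, neg_mem_iff]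
  · rwa [hZ.jac_swap_right, neg, neg_mem_iff]
  · rw [← neg_mem_iff]
    convert h using 1
    simp only [skewSum]; abel
  · rw [← neg_mem_iff]
    convert h using 1
    simp only [skewSum]; abel
  · exact hS (.skew, t) (by simp [gens, ht])

theorem jac_mul_jac_mem (hZ : IsMalcev Z) (hS : ∀ g ∈ gens, genEval z g ∈ S) (t : Split)
    (ht : t ∈ splits) : jac (z t.a) (z t.b) (z t.c) * jac (z t.d) (z t.e) (z t.f) ∈ S := by
  by_cases h : t.a = 0
  · exact hS (.jac, t) (by simp [gens, ht, h])
  · obtain ⟨h1, h2⟩ := mirror_mem_splits t ht h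
    rw [hZ.anticomm, neg_mem_iff]
    exact hS (.jac, ⟨t.d, t.e, t.f, t.a, t.b, t.c⟩) (by
      rw [h2] at h1
      simp [gens, h1, h2])

theorem jac_mul_mem (hZ : IsMalcev Z) (hS : ∀ g ∈ gens, genEval z g ∈ S) (a b c d e f : Fin 6)
    (hn : [a, b, c, d, e, f].Nodup) : jac (z a) (z b) (z c) * (z d * z e * z f) ∈ S := by
  refine (forall_of_splits (Q := fun a b c d e f =>
    jac (z a) (z b) (z c) * (z d * z e * z f) ∈ S ∧ jac (z a) (z b) (z c) * (z d * z f * z e) ∈ S ∧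
    jac (z a) (z b) (z c) * (z e * z f * z d) ∈ S) (fun a b c d e f h => ?_)
    (fun a b c d e f h => ?_) (fun a b c d e f h => ?_) (fun a b c d e f h => ?_)
    (fun t ht => ?_) a b c d e f hn).1
  · simpa only [hZ.jac_swap_left (z a) (z b), neg_mul, neg_mem_iff] using h
  · simpa only [hZ.jac_swap_right (z a) (z b) (z c), neg_mul, neg_mem_iff] using h
  · refine ⟨?_, h.2.2, h.2.1⟩
    rw [hZ.anticomm (z d), neg_mul, mul_neg, neg_mem_iff]
    exact h.1
  · refine ⟨h.2.1, h.1, ?_⟩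
    rw [hZ.anticomm (z e), neg_mul, mul_neg, neg_mem_iff]
    exact h.2.2
  · have h1 : jac (z t.a) (z t.b) (z t.c) * (z t.d * z t.e * z t.f) ∈ S :=
      hS (.left, t) (by simp [gens, ht])
    have h2 : jac (z t.a) (z t.b) (z t.c) * (z t.d * z t.f * z t.e) ∈ S :=
      hS (.mid, t) (by simp [gens, ht])
    refine ⟨h1, h2, ?_⟩
    have key := S.add_mem (S.sub_mem (jac_mul_jac_mem hZ hS t ht) h1) h2
    rw [jac.eq_def (z t.d), hZ.anticomm (z t.d) (z t.f), neg_mul, mul_add, mul_add, mul_neg] at key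
    convert key using 1
    abel

theorem jac_word_mem [CharZero K] (hZ : IsMalcev Z) (hS : ∀ g ∈ gens, genEval z g ∈ S)
    (a b c d e f : Fin 6) (hn : [a, b, c, d, e, f].Nodup) :
    jac (z a) (z b) (z c) * z d * z e * z f ∈ S := by
  let σ : ℕ → Fin 6 := fun n => [a, b, c, d, e, f].getD n a
  have hσ : ∀ i j k l m n, IsPerm i j k l m n → [σ i, σ j, σ k, σ l, σ m, σ n].Nodup := by
    intro i j k l m n h
    refine List.Nodup.map_on (l := [i, j, k, l, m, n]) (f := σ) (fun x hx y hy hxy => ?_) h.1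
    have hx' : x < [a, b, c, d, e, f].length := h.2 x hx
    have hy' : y < [a, b, c, d, e, f].length := h.2 y hy
    simp only [σ, List.getD_eq_getElem _ _ hx', List.getD_eq_getElem _ _ hy'] at hxy
    exact (hn.getElem_inj_iff).1 hxy
  have key := JacWord.kills_word (fun n => z (σ n)) S.mkQ.toAddMonoidHom hZ
    ⟨fun i j k l m n h => (Submodule.Quotient.mk_eq_zero S).2
      (symSum_mem hZ hS _ _ _ _ _ _ (hσ _ _ _ _ _ _ h)),
     fun i j k l m n h => (Submodule.Quotient.mk_eq_zero S).2
      (skewSum_mem hZ hS _ _ _ _ _ _ (hσ _ _ _ _ _ _ h)),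
     fun i j k l m n h => (Submodule.Quotient.mk_eq_zero S).2
      (jac_mul_mem hZ hS _ _ _ _ _ _ (hσ _ _ _ _ _ _ h))⟩
  rw [← map_zsmul] at key
  exact mem_of_zsmul_mem 108864 (by norm_num) ((Submodule.Quotient.mk_eq_zero S).1 key)

theorem containsJacobians_of_gens [CharZero K] (hZ : IsMalcev Z)
    (hS : ∀ g ∈ gens, genEval z g ∈ S) : ContainsJacobians z S := by
  have h3 := jac_mul_mem hZ hS
  have h111 := jac_word_mem hZ hS
  have h21 : ∀ a b c d e f : Fin 6, [a, b, c, d, e, f].Nodup →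
      jac (z a) (z b) (z c) * (z d * z e) * z f ∈ S := by
    intro a b c d e f hn
    refine mem_of_zsmul_mem 12 (by norm_num) ?_
    rw [← smul_mul_assoc, hZ.twelve_jac_mul_mul]
    simp only [add_mul, sub_mul, neg_mul, smul_mul_assoc]
    repeat' first
      | refine S.add_mem ?_ ?_
      | refine S.sub_mem ?_ ?_
      | refine S.neg_mem ?_
      | refine S.smul_of_tower_mem (_ : ℤ) ?_
    all_goals
      refine h111 _ _ _ _ _ _ ?_
      simp only [List.nodup_cons, List.mem_cons, not_or] at hn ⊢
      grind
  refine ⟨h111, fun a b c d e f hn => ?_, h21, h3⟩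
  refine mem_of_zsmul_mem 3 (by norm_num) ?_
  rw [hZ.three_right_mul, jac.eq_def (z d)]
  simp only [sub_mul, mul_add]
  repeat' first
    | refine S.add_mem ?_ ?_
    | refine S.sub_mem ?_ ?_
    | refine S.smul_of_tower_mem (_ : ℤ) ?_
  all_goals
    first
      | refine h111 _ _ _ _ _ _ ?_
      | refine h21 _ _ _ _ _ _ ?_
      | refine h3 _ _ _ _ _ _ ?_
    simp only [List.nodup_cons, List.mem_cons, not_or] at hn ⊢
    grind

end Generators

/-- The coefficient of a Jacobian of elements of a basis multiplied according to
`B i * B j = β i j • B (i ^^^ j)`. -/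
def jacCoef (β : ℕ → ℕ → ℤ) (i j k : ℕ) : ℤ :=
  β i j * β (i ^^^ j) k + β j k * β (j ^^^ k) i + β k i * β (k ^^^ i) j

/-- The coefficient of a product `x d e f` of such basis elements. -/
def wordCoef (β : ℕ → ℕ → ℤ) (i d e f : ℕ) : ℤ :=
  β i d * β (i ^^^ d) e * β (i ^^^ d ^^^ e) f

/-- The coefficient of the value of a generator at such basis elements. -/
def genCoef (β : ℕ → ℕ → ℤ) (x : Fin 6 → ℕ) : GenKind × Split → ℤ
  | (k, ⟨a, b, c, d, e, f⟩) =>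
    if jacCoef β (x a) (x b) (x c) = 0 then 0 else
    jacCoef β (x a) (x b) (x c) *
    let i := x a ^^^ x b ^^^ x c
    match k with
    | .sym => wordCoef β i (x d) (x e) (x f) + wordCoef β i (x d) (x f) (x e) +
        wordCoef β i (x e) (x d) (x f) + wordCoef β i (x e) (x f) (x d) +
        wordCoef β i (x f) (x d) (x e) + wordCoef β i (x f) (x e) (x d)
    | .skew => wordCoef β i (x d) (x e) (x f) - wordCoef β i (x d) (x f) (x e) -
        wordCoef β i (x e) (x d) (x f) + wordCoef β i (x e) (x f) (x d) +
        wordCoef β i (x f) (x d) (x e) - wordCoef β i (x f) (x e) (x d)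
    | .left => β (x d) (x e) * β (x d ^^^ x e) (x f) * β i (x d ^^^ x e ^^^ x f)
    | .mid => β (x d) (x f) * β (x d ^^^ x f) (x e) * β i (x d ^^^ x e ^^^ x f)
    | .jac => jacCoef β (x d) (x e) (x f) * β i (x d ^^^ x e ^^^ x f)

section Graded

variable {Z : Type*} [NonUnitalNonAssocRing Z] {B : ℕ → Z} {β : ℕ → ℕ → ℤ}

theorem jac_graded (h : ∀ i j, B i * B j = β i j • B (i ^^^ j)) (i j k : ℕ) :
    jac (B i) (B j) (B k) = jacCoef β i j k • B (i ^^^ j ^^^ k) := by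
  have h1 : j ^^^ k ^^^ i = i ^^^ j ^^^ k := by
    rw [Nat.xor_comm, Nat.xor_assoc]
  have h2 : k ^^^ i ^^^ j = i ^^^ j ^^^ k := by
    rw [Nat.xor_assoc, Nat.xor_comm]
  simp only [jac, h, smul_mul_assoc, smul_smul, h1, h2, jacCoef, add_smul]

theorem word_graded (h : ∀ i j, B i * B j = β i j • B (i ^^^ j)) (i d e f : ℕ) :
    B i * B d * B e * B f = wordCoef β i d e f • B (i ^^^ (d ^^^ e ^^^ f)) := by
  simp only [h, smul_mul_assoc, smul_smul, wordCoef, ← Nat.xor_assoc]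

end Graded

theorem genEval_graded {Z : Type} [NonUnitalNonAssocRing Z] {B : ℕ → Z} {β : ℕ → ℕ → ℤ}
    (h : ∀ i j, B i * B j = β i j • B (i ^^^ j)) (x : Fin 6 → ℕ) (g : GenKind × Split) :
    genEval (fun i => B (x i)) g = genCoef β x g •
      B (x g.2.a ^^^ x g.2.b ^^^ x g.2.c ^^^ (x g.2.d ^^^ x g.2.e ^^^ x g.2.f)) := by
  obtain ⟨k, a, b, c, d, e, f⟩ := g
  have h1 : x d ^^^ x f ^^^ x e = x d ^^^ x e ^^^ x f := Nat.xor_right_comm ..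
  have h2 : x e ^^^ x d ^^^ x f = x d ^^^ x e ^^^ x f := by rw [Nat.xor_comm (x e)]
  have h3 : x e ^^^ x f ^^^ x d = x d ^^^ x e ^^^ x f := by rw [Nat.xor_comm, Nat.xor_assoc]
  have h4 : x f ^^^ x d ^^^ x e = x d ^^^ x e ^^^ x f := by rw [Nat.xor_assoc, Nat.xor_comm]
  have h5 : x f ^^^ x e ^^^ x d = x d ^^^ x e ^^^ x f := by
    rw [Nat.xor_comm, Nat.xor_comm (x f), Nat.xor_assoc]
  rw [genCoef]
  split_ifs with h0
  · cases k <;> simp [genEval, symSum, skewSum, jac_graded h, h0]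
  · cases k <;> simp only [genEval, symSum, skewSum, jac_graded h (x a)] <;>
      generalize x a ^^^ x b ^^^ x c = i <;> simp only [smul_mul_assoc, word_graded h] <;>
      simp only [jac_graded h, h1, h2, h3, h4, h5, h, smul_mul_assoc, mul_smul_comm, smul_smul,
        mul_add, mul_sub, add_smul, sub_smul, mul_assoc, mul_left_comm]

/-- The value of a linear form, given by the list of its first coefficients. -/
def formVal {K : Type*} [Field K] : List ℤ → (ℕ → K) → K
  | [], _ => 0
  | a :: r, d => a * d 0 + formVal r fun n => d (n + 1)

/-- The linear form `b • r - a • s`. -/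
def combine (a b : ℤ) : List ℤ → List ℤ → List ℤ
  | x :: r, y :: s => (b * x - a * y) :: combine a b r s
  | [], s => s.map fun y => -a * y
  | r, [] => r.map fun x => b * x

/-- Elimination of the first variable from a linear form by means of the form `b, s`. -/
def eliminate (b : ℤ) (s : List ℤ) : List ℤ → List ℤ
  | [] => []
  | a :: r => if a = 0 then r else combine (a / Int.gcd a b) (b / Int.gcd a b) r s

/-- The first form with nonzero first coefficient and the list of the other forms. -/
def findPivot : List (List ℤ) → Option ((ℤ × List ℤ) × List (List ℤ))
  | [] => none
  | [] :: rs => findPivot rs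
  | (a :: r) :: rs => if a = 0 then
      match findPivot rs with
      | none => none
      | some (p, rs') => some (p, (a :: r) :: rs')
    else some ((a, r), rs)

/-- Gaussian elimination: the linear forms have only the trivial zero in `n` variables. -/
def isNonsingular : ℕ → List (List ℤ) → Bool
  | 0, _ => true
  | n + 1, rs =>
    match findPivot rs with
    | none => false
    | some ((b, s), rs') => isNonsingular n (rs'.map (eliminate b s))

section Elimination

variable {K : Type*} [Field K]

theorem formVal_zero (r : List ℤ) : formVal r (0 : ℕ → K) = 0 := by
  induction r with
  | nil => rfl
  | cons a r ih =>
    have : formVal (a :: r) (0 : ℕ → K) = a * 0 + formVal r (0 : ℕ → K) := rfl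
    rw [this, ih, mul_zero, add_zero]

theorem formVal_map_mul (b : ℤ) (r : List ℤ) (d : ℕ → K) :
    formVal (r.map fun x => b * x) d = b * formVal r d := by
  induction r generalizing d with
  | nil => simp [formVal]
  | cons a r ih => simp [formVal, ih]; ring

theorem formVal_combine (a b : ℤ) (r s : List ℤ) (d : ℕ → K) :
    formVal (combine a b r s) d = b * formVal r d - a * formVal s d := by
  induction r generalizing s d with
  | nil => rw [combine, formVal_map_mul, formVal]; push_cast; ring
  | cons x r ih =>
    cases s with
    | nil => simp [combine, formVal_map_mul, formVal]; ring
    | cons y s => simp [combine, formVal, ih]; ring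

theorem formVal_eliminate {b : ℤ} {s r : List ℤ} {d : ℕ → K} (hs : formVal (b :: s) d = 0)
    (hr : formVal r d = 0) : formVal (eliminate b s r) (fun n => d (n + 1)) = 0 := by
  cases r with
  | nil => rfl
  | cons a r =>
    rw [eliminate]
    rw [formVal] at hs hr
    split_ifs with ha
    · simpa [ha] using hr
    · have h : (a / Int.gcd a b) * b = (b / Int.gcd a b) * a := by
        obtain ⟨u, hu⟩ := Int.gcd_dvd_left a b
        obtain ⟨v, hv⟩ := Int.gcd_dvd_right a b
        have hg : (Int.gcd a b : ℤ) ≠ 0 := fun h => ha (by rw [hu, h, zero_mul])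
        rw [show a / (Int.gcd a b : ℤ) = u from Int.ediv_eq_of_eq_mul_right hg hu,
          show b / (Int.gcd a b : ℤ) = v from Int.ediv_eq_of_eq_mul_right hg hv]
        linear_combination u * hv - v * hu
      rw [formVal_combine]
      have h' := congrArg (Int.cast : ℤ → K) h
      push_cast at h'
      linear_combination ((b / Int.gcd a b : ℤ) : K) * hr - ((a / Int.gcd a b : ℤ) : K) * hs +
        d 0 * h'

theorem mem_of_findPivot {rs : List (List ℤ)} {b : ℤ} {s : List ℤ} {rs' : List (List ℤ)}
    (h : findPivot rs = some ((b, s), rs')) : b ≠ 0 ∧ b :: s ∈ rs ∧ ∀ r ∈ rs', r ∈ rs := by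
  induction rs generalizing rs' with
  | nil => simp [findPivot] at h
  | cons r rs ih =>
    cases r with
    | nil =>
      obtain ⟨h1, h2, h3⟩ := ih (by simpa only [findPivot] using h)
      exact ⟨h1, .tail _ h2, fun r hr => .tail _ (h3 r hr)⟩
    | cons a r =>
      rw [findPivot] at h
      split_ifs at h with ha
      · cases hf : findPivot rs with
        | none => simp [hf] at h
        | some q =>
          obtain ⟨p, rs''⟩ := q
          simp only [hf, Option.some.injEq, Prod.mk.injEq] at h
          obtain ⟨rfl, rfl⟩ := h
          obtain ⟨h1, h2, h3⟩ := ih hf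
          exact ⟨h1, .tail _ h2, List.forall_mem_cons.2
            ⟨List.mem_cons_self, fun r hr => .tail _ (h3 r hr)⟩⟩
      · simp only [Option.some.injEq, Prod.mk.injEq] at h
        obtain ⟨⟨rfl, rfl⟩, rfl⟩ := h
        exact ⟨ha, List.mem_cons_self, fun r hr => .tail _ hr⟩

theorem eq_zero_of_isNonsingular [CharZero K] {n : ℕ} {rs : List (List ℤ)}
    (h : isNonsingular n rs = true) {d : ℕ → K} (hd : ∀ k, n ≤ k → d k = 0)
    (hrs : ∀ r ∈ rs, formVal r d = 0) : d = 0 := by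
  induction n generalizing rs d with
  | zero => exact funext fun k => hd k k.zero_le
  | succ n ih =>
    rw [isNonsingular] at h
    cases hf : findPivot rs with
    | none => simp [hf] at h
    | some q =>
      obtain ⟨⟨b, s⟩, rs'⟩ := q
      obtain ⟨hb, hs, hr⟩ := mem_of_findPivot hf
      simp only [hf] at h
      have h0 := ih h (d := fun n => d (n + 1)) (fun k hk => hd _ (by omega)) (by
        simp only [List.forall_mem_map]
        exact fun r h' => formVal_eliminate (hrs _ hs) (hrs _ (hr r h')))
      have h1 := hrs _ hs
      rw [formVal, h0, formVal_zero, add_zero, mul_eq_zero, Int.cast_eq_zero] at h1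
      funext k
      cases k with
      | zero => exact h1.resolve_left hb
      | succ k => exact congrFun h0 k

theorem formVal_map {ι : Type*} (l : List ι) (c : ι → ℤ) (d : ℕ → K) :
    formVal (l.map c) d = ∑ i : Fin l.length, (c l[i] : K) * d i := by
  induction l generalizing d with
  | nil => simp [formVal]
  | cons a l ih =>
    rw [List.map_cons, formVal, ih]
    simp [Fin.sum_univ_succ]

end Elimination

/-- The signs of the products `e_i e_j = ± e_{i ^^^ j}` of the basis octonions, with indices taken
modulo `8`. -/
def octSign (i j : ℕ) : ℤ :=
  bif Nat.testBit 12887178008817199616 (8 * (i % 8) + j % 8) then -1 else 1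

/-- The structure constants of the commutator of octonions. -/
def octBracket (i j : ℕ) : ℤ := octSign i j - octSign j i

/-- The codes of the six vectors. -/
def vectorCodes : List ℕ := [1, 2, 4, 8, 16, 32]

/-- Whether the lowest six binary digits have an odd sum. -/
def oddDigits (m : ℕ) : Bool :=
  m.testBit 0 ^^ m.testBit 1 ^^ m.testBit 2 ^^ m.testBit 3 ^^ m.testBit 4 ^^ m.testBit 5

/-- The sign of the product of the exterior monomial with code `m` by the vector with code `v`
from the right. -/
def extSign (m v : ℕ) : ℤ :=
  bif vectorCodes.contains v then
    bif (m % 64) &&& v != 0 then 0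
    else bif oddDigits (m % 64 / v) then -1 else 1
  else 0

/-- The structure constants of the commutator of the exterior test algebra: a code whose binary
digit number six is `1` stands for an element of the bimodule. -/
def extBracket (i j : ℕ) : ℤ :=
  bif i.testBit 6 then bif j.testBit 6 then 0 else
    (bif oddDigits i then 3 else 1) * extSign i j
  else bif j.testBit 6 then -((bif oddDigits j then 3 else 1) * extSign j i)
  else 0

/-- The assignments of basis octonions to the variables. -/
def octAssignments : List (List ℕ) :=
  [[1, 2, 2, 2, 2, 4], [1, 1, 2, 1, 1, 4], [1, 2, 4, 1, 1, 1], [1, 2, 2, 2, 4, 2],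
    [1, 2, 1, 4, 1, 1], [1, 1, 1, 1, 2, 4], [1, 2, 1, 1, 4, 1], [1, 1, 1, 2, 1, 4],
    [1, 1, 2, 4, 1, 1], [1, 2, 2, 4, 2, 2], [1, 1, 1, 2, 4, 2], [1, 1, 2, 4, 1, 2],
    [1, 1, 2, 1, 2, 4], [1, 1, 2, 2, 1, 4], [1, 2, 2, 4, 4, 2], [1, 1, 2, 4, 2, 1],
    [1, 1, 2, 4, 4, 1], [1, 2, 1, 4, 4, 1], [1, 1, 2, 1, 4, 4], [1, 2, 2, 2, 4, 4],
    [1, 2, 1, 4, 1, 4], [1, 2, 1, 2, 1, 4], [1, 2, 4, 1, 4, 5], [1, 2, 3, 1, 4, 3],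
    [1, 1, 2, 4, 3, 1], [1, 2, 1, 1, 2, 4], [1, 2, 1, 4, 2, 1], [1, 2, 1, 3, 4, 2],
    [1, 2, 4, 2, 6, 4], [1, 2, 4, 4, 1, 5], [1, 2, 3, 4, 1, 2], [1, 2, 3, 4, 1, 3],
    [1, 2, 1, 4, 5, 1], [1, 2, 3, 4, 3, 2], [1, 2, 4, 2, 3, 1], [1, 2, 2, 1, 4, 3],
    [1, 2, 4, 1, 1, 2], [1, 2, 4, 5, 5, 4], [1, 2, 4, 5, 1, 4], [1, 2, 3, 4, 2, 1],
    [1, 1, 2, 1, 4, 3], [1, 2, 3, 3, 1, 4], [1, 2, 1, 1, 4, 5], [1, 2, 4, 1, 2, 1],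
    [1, 2, 2, 4, 2, 6], [1, 2, 2, 4, 6, 2], [1, 2, 1, 4, 1, 5], [1, 2, 4, 1, 1, 5],
    [1, 2, 4, 1, 5, 1], [1, 2, 4, 6, 2, 2], [1, 1, 2, 1, 4, 6], [1, 1, 2, 4, 1, 6],
    [1, 2, 1, 1, 4, 6], [1, 1, 2, 4, 6, 1], [1, 2, 1, 4, 1, 6], [1, 1, 1, 2, 4, 6],
    [1, 2, 1, 4, 6, 1], [1, 2, 4, 1, 1, 6], [1, 2, 4, 1, 6, 1], [1, 2, 4, 6, 1, 1],
    [1, 2, 4, 2, 3, 4], [1, 2, 4, 4, 3, 2], [1, 2, 4, 4, 2, 3], [1, 2, 4, 3, 2, 4],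
    [1, 2, 4, 1, 4, 3], [1, 1, 2, 2, 4, 5], [1, 1, 2, 4, 3, 4], [1, 2, 4, 2, 1, 5],
    [1, 1, 2, 4, 4, 3], [1, 2, 1, 4, 3, 6], [1, 2, 4, 7, 6, 1], [1, 1, 2, 4, 5, 7],
    [1, 1, 2, 4, 7, 6], [1, 2, 4, 5, 7, 1], [1, 1, 2, 3, 4, 7], [1, 2, 4, 3, 1, 6],
    [1, 1, 2, 4, 6, 3], [1, 2, 4, 5, 1, 7], [1, 2, 3, 1, 4, 6], [1, 2, 1, 3, 4, 7],
    [1, 2, 4, 7, 2, 3], [1, 2, 3, 4, 1, 7], [1, 2, 4, 5, 6, 1], [1, 2, 3, 4, 6, 7]]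

/-- The assignments in the exterior test algebra. -/
def extAssignments : List (List ℕ) :=
  [[64, 2, 4, 8, 16, 32], [1, 64, 4, 8, 16, 32], [1, 2, 64, 8, 16, 32], [1, 2, 4, 64, 16, 32],
    [1, 2, 4, 8, 64, 32], [1, 2, 4, 8, 16, 64]]

/-- The assignment given by a list of values. -/
def assign (l : List ℕ) (i : Fin 6) : ℕ := l.getD i 0

/-- The linear forms expressing the values of a combination of the generators. -/
def testForms : List (List ℤ) :=
  (octAssignments.map fun l => gens.map (genCoef octBracket (assign l))) ++
    extAssignments.map fun l => gens.map (genCoef extBracket (assign l))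

set_option maxRecDepth 100000 in
theorem isNonsingular_testForms : isNonsingular 90 testForms = true := by
  decide +kernel

section AlgebraOfInstances

variable {K V : Type*} [Field K] [AddCommGroup V] [Module K V] (μ : V →ₗ[K] V →ₗ[K] V)

instance : IsScalarTower K (AlgebraOf μ) (AlgebraOf μ) where
  smul_assoc c a b := by
    obtain ⟨a, rfl⟩ := (AlgebraOf.of μ).surjective a
    obtain ⟨b, rfl⟩ := (AlgebraOf.of μ).surjective b
    rw [smul_eq_mul, smul_eq_mul, ← map_smul, AlgebraOf.of_mul_of, AlgebraOf.of_mul_of, map_smul,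
      LinearMap.smul_apply, map_smul]

instance : SMulCommClass K (AlgebraOf μ) (AlgebraOf μ) where
  smul_comm c a b := by
    obtain ⟨a, rfl⟩ := (AlgebraOf.of μ).surjective a
    obtain ⟨b, rfl⟩ := (AlgebraOf.of μ).surjective b
    simp only [smul_eq_mul, ← map_smul, AlgebraOf.of_mul_of]

theorem AlgebraOf.isAlternative
    (left : ∀ a b c, μ (μ b a) c - μ b (μ a c) = -(μ (μ a b) c - μ a (μ b c)))
    (right : ∀ a b c, μ (μ a c) b - μ a (μ c b) = -(μ (μ a b) c - μ a (μ b c))) :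
    IsAlternative (AlgebraOf μ) :=
  ⟨left, right⟩

end AlgebraOfInstances

section Twisted

variable (K : Type*) [Field K]

/-- The product `e_i e_j = c i j • e_{i ^^^ j}`. -/
noncomputable def twisted (c : ℕ → ℕ → ℤ) : (ℕ →₀ K) →ₗ[K] (ℕ →₀ K) →ₗ[K] ℕ →₀ K :=
  Finsupp.linearCombination K fun i => Finsupp.linearCombination K fun j =>
    Finsupp.single (i ^^^ j) (c i j : K)

theorem twisted_single (c : ℕ → ℕ → ℤ) (i j : ℕ) (a b : K) :
    twisted K c (Finsupp.single i a) (Finsupp.single j b) =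
      Finsupp.single (i ^^^ j) (c i j * (a * b)) := by
  simp only [twisted, Finsupp.linearCombination_single, LinearMap.smul_apply, Finsupp.smul_single,
    smul_eq_mul]
  congr 1
  ring

theorem octSign_cocycle (i j k : ℕ) :
    octSign j i * octSign (j ^^^ i) k - octSign i k * octSign j (i ^^^ k) =
      -(octSign i j * octSign (i ^^^ j) k - octSign j k * octSign i (j ^^^ k)) ∧
    octSign i k * octSign (i ^^^ k) j - octSign k j * octSign i (k ^^^ j) =
      -(octSign i j * octSign (i ^^^ j) k - octSign j k * octSign i (j ^^^ k)) := by
  have h : ∀ i < 8, ∀ j < 8, ∀ k < 8,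
    octSign j i * octSign (j ^^^ i) k - octSign i k * octSign j (i ^^^ k) =
      -(octSign i j * octSign (i ^^^ j) k - octSign j k * octSign i (j ^^^ k)) ∧
    octSign i k * octSign (i ^^^ k) j - octSign k j * octSign i (k ^^^ j) =
      -(octSign i j * octSign (i ^^^ j) k - octSign j k * octSign i (j ^^^ k)) := by
    decide +kernel
  have xor_mod : ∀ i j, (i ^^^ j) % 8 = (i % 8 ^^^ j % 8) % 8 := fun i j => by
    rw [Nat.xor_mod_two_pow (n := 3), Nat.xor_mod_two_pow (n := 3), Nat.mod_mod, Nat.mod_mod]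
  have red : ∀ i j, octSign i j = octSign (i % 8) (j % 8) := fun i j => by
    simp only [octSign, Nat.mod_mod]
  have redl : ∀ i j k, octSign (i ^^^ j) k = octSign (i % 8 ^^^ j % 8) (k % 8) := fun i j k => by
    rw [octSign, octSign, xor_mod, Nat.mod_mod]
  have redr : ∀ i j k, octSign i (j ^^^ k) = octSign (i % 8) (j % 8 ^^^ k % 8) := fun i j k => by
    rw [octSign, octSign, xor_mod, Nat.mod_mod]
  have := h (i % 8) (Nat.mod_lt _ (by norm_num)) (j % 8) (Nat.mod_lt _ (by norm_num)) (k % 8)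
    (Nat.mod_lt _ (by norm_num))
  rw [redl j i k, redl i j k, redl i k j, redr j i k, redr i j k, redr i k j, red i j, red j i,
    red i k, red j k, red k j]
  exact this

/-- The octonions, with infinitely many copies of their basis. -/
abbrev OctAlgebra : Type _ := AlgebraOf (twisted K octSign)

theorem OctAlgebra.isAlternative : IsAlternative (OctAlgebra K) := by
  refine AlgebraOf.isAlternative _ (fun a b c => ?_) (fun a b c => ?_)
  all_goals
    induction a using Finsupp.induction_linear with
    | zero => simp
    | add a a' h h' =>
      simp only [map_add, LinearMap.add_apply]
      linear_combination (norm := abel) h + h'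
    | single i x =>
    induction b using Finsupp.induction_linear with
    | zero => simp
    | add a a' h h' =>
      simp only [map_add, LinearMap.add_apply]
      linear_combination (norm := abel) h + h'
    | single j y =>
    induction c using Finsupp.induction_linear with
    | zero => simp
    | add a a' h h' =>
      simp only [map_add, LinearMap.add_apply]
      linear_combination (norm := abel) h + h'
    | single k z =>
    have h := octSign_cocycle i j k
    simp only [twisted_single, ← Nat.xor_assoc, Nat.xor_comm j i, Nat.xor_right_comm i k j,
      ← Finsupp.single_sub, ← Finsupp.single_neg] at h ⊢
    congr 1
    have h1 := congrArg (Int.cast : ℤ → K) h.1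
    have h2 := congrArg (Int.cast : ℤ → K) h.2
    push_cast at h1 h2
    first
    | linear_combination x * y * z * h1
    | linear_combination x * y * z * h2

/-- The action of the span of the vectors on the exterior algebra by multiplication from the
right. -/
noncomputable abbrev extMul : (ℕ →₀ K) →ₗ[K] (ℕ →₀ K) →ₗ[K] ℕ →₀ K := twisted K extSign

theorem extSign_cocycle (m v w : ℕ) :
    extSign m v * extSign (m ^^^ v) w = -(extSign m w * extSign (m ^^^ w) v) := by
  have h : ∀ v ∈ vectorCodes, ∀ w ∈ vectorCodes, ∀ m < 64,
      extSign m v * extSign (m ^^^ v) w = -(extSign m w * extSign (m ^^^ w) v) := by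
    decide +kernel
  have h0 : ∀ v, v ∉ vectorCodes → ∀ m, extSign m v = 0 := fun v hv m => by
    simp [extSign, hv]
  by_cases hv : v ∈ vectorCodes
  · by_cases hw : w ∈ vectorCodes
    · have lt : ∀ v ∈ vectorCodes, v < 64 := by decide
      have red : ∀ m v, extSign m v = extSign (m % 64) v := fun m v => by
        simp only [extSign, Nat.mod_mod]
      have xor_mod : ∀ v ∈ vectorCodes, (m ^^^ v) % 64 = m % 64 ^^^ v := fun v hv => by
        rw [Nat.xor_mod_two_pow (n := 6), Nat.mod_eq_of_lt (a := v) (lt v hv)]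
      have h1 : ∀ v ∈ vectorCodes, ∀ w, extSign (m ^^^ v) w = extSign (m % 64 ^^^ v) w :=
        fun v hv w => by rw [red, xor_mod v hv]
      rw [h1 v hv, h1 w hw, red m v, red m w]
      exact h v hv w hw _ (Nat.mod_lt _ (by norm_num))
    · simp [h0 w hw]
  · simp [h0 v hv]

theorem extMul_anticomm (m v w : ℕ →₀ K) :
    extMul K (extMul K m v) w = -extMul K (extMul K m w) v := by
  induction m using Finsupp.induction_linear with
  | zero => simp
  | add a a' h h' => simp only [map_add, LinearMap.add_apply, h, h', neg_add]
  | single i x =>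
  induction v using Finsupp.induction_linear with
  | zero => simp
  | add a a' h h' => simp only [map_add, LinearMap.add_apply, h, h', neg_add]
  | single j y =>
  induction w using Finsupp.induction_linear with
  | zero => simp
  | add a a' h h' => simp only [map_add, LinearMap.add_apply, h, h', neg_add]
  | single k z =>
  rw [twisted_single, twisted_single, twisted_single, twisted_single, Nat.xor_right_comm,
    ← Finsupp.single_neg]
  congr 1
  have h := congrArg (Int.cast : ℤ → K) (extSign_cocycle i j k)
  push_cast at h
  linear_combination x * y * z * h

/-- The product of the split null extension of a space of vectors by a sum of two copies of its
exterior algebra, on which the vectors act through two reflections whose product has order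
three. -/
noncomputable def extProduct : (ℕ →₀ K) × (ℕ →₀ K) × (ℕ →₀ K) →ₗ[K]
    (ℕ →₀ K) × (ℕ →₀ K) × (ℕ →₀ K) →ₗ[K] (ℕ →₀ K) × (ℕ →₀ K) × (ℕ →₀ K) :=
  LinearMap.mk₂ K (fun p q => (0, extMul K p.2.2 q.1 + extMul K q.2.1 p.1,
      extMul K p.2.1 q.1 - extMul K q.2.1 p.1 - extMul K q.2.2 p.1))
    (fun p p' q => by
      ext1
      · simp
      · ext1 <;> simp only [Prod.fst_add, Prod.snd_add, map_add, LinearMap.add_apply] <;> abel)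
    (fun c p q => by simp [smul_sub])
    (fun p q q' => by
      ext1
      · simp
      · ext1 <;> simp only [Prod.fst_add, Prod.snd_add, map_add, LinearMap.add_apply] <;> abel)
    (fun c p q => by simp [smul_sub])

theorem extProduct_apply (a b : ℕ →₀ K) (p q : (ℕ →₀ K) × (ℕ →₀ K)) :
    extProduct K (a, p) (b, q) = (0, extMul K p.2 b + extMul K q.1 a,
      extMul K p.1 b - extMul K q.1 a - extMul K q.2 a) := rfl

/-- The algebra with product `extProduct`. -/
abbrev ExtAlgebra : Type _ := AlgebraOf (extProduct K)

theorem ExtAlgebra.isAlternative : IsAlternative (ExtAlgebra K) := by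
  refine AlgebraOf.isAlternative _ (fun a b c => ?_) (fun a b c => ?_)
  all_goals
    obtain ⟨a, a₁, a₂⟩ := a
    obtain ⟨b, b₁, b₂⟩ := b
    obtain ⟨c, c₁, c₂⟩ := c
    have h1 := fun m => extMul_anticomm K m a b
    have h2 := fun m => extMul_anticomm K m a c
    have h3 := fun m => extMul_anticomm K m b c
    ext1
    · simp [extProduct_apply]
    ext1 <;>
    simp only [extProduct_apply, Prod.fst_sub, Prod.snd_sub, Prod.fst_neg,
        Prod.snd_neg, map_zero, map_add, map_sub, LinearMap.add_apply, LinearMap.sub_apply, h1, h2,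
        h3] <;> abel

end Twisted

section TestElements

variable (K : Type) [Field K]

/-- The basis octonions as elements of the commutator algebra. -/
noncomputable def octBasis (i : ℕ) : CommutatorAlgebra K (OctAlgebra K) :=
  AlgebraOf.of _ (AlgebraOf.of _ (Finsupp.single i 1))

theorem octBasis_ne_zero (i : ℕ) : octBasis K i ≠ 0 := by
  simp [octBasis]

theorem octBasis_mul (i j : ℕ) :
    octBasis K i * octBasis K j = octBracket i j • octBasis K (i ^^^ j) := by
  simp only [octBasis, AlgebraOf.of_mul_of, commutator₂_apply, twisted_single, ← map_sub,
    ← map_zsmul, Nat.xor_comm j i, ← Finsupp.single_sub, Finsupp.smul_single]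
  simp [octBracket]

/-- Vectors and elements of the bimodule as elements of the commutator algebra, with codes as
in `extBracket`. -/
noncomputable def extBasis (i : ℕ) : CommutatorAlgebra K (ExtAlgebra K) :=
  AlgebraOf.of _ (AlgebraOf.of (extProduct K)
    (bif i.testBit 6 then
      bif oddDigits i then (0, Finsupp.single i (-1), Finsupp.single i 2)
      else (0, Finsupp.single i 1, 0)
    else (Finsupp.single i 1, 0, 0)))

theorem extBasis_ne_zero (i : ℕ) : extBasis K i ≠ 0 := by
  simp only [extBasis, ne_eq, map_eq_zero_iff _ (LinearEquiv.injective _)]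
  cases i.testBit 6 <;> cases oddDigits i <;> simp

theorem oddDigits_xor (i : ℕ) {v : ℕ} (hv : v ∈ vectorCodes) :
    oddDigits (i ^^^ v) = !oddDigits i := by
  have h : oddDigits (i ^^^ v) = (oddDigits i ^^ oddDigits v) := by
    simp only [oddDigits, Nat.testBit_xor]
    simp only [Bool.xor_assoc, Bool.xor_left_comm]
  have hv' : ∀ v ∈ vectorCodes, oddDigits v = true := by decide
  rw [h, hv' v hv, Bool.xor_true]

theorem extBasis_mul_of_testBit (i j : ℕ) (hi : i.testBit 6 = true) (hj : j.testBit 6 = false) :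
    extBasis K i * extBasis K j =
      ((bif oddDigits i then 3 else 1) * extSign i j) • extBasis K (i ^^^ j) := by
  have hij : (i ^^^ j).testBit 6 = true := by rw [Nat.testBit_xor, hi, hj]; rfl
  by_cases hv : j ∈ vectorCodes
  · simp only [extBasis, hi, hj, hij, oddDigits_xor i hv, AlgebraOf.of_mul_of, commutator₂_apply,
      ← map_sub, ← map_zsmul, cond_true, cond_false]
    congr 2
    cases oddDigits i <;> refine Prod.ext (by simp [extProduct_apply]) (Prod.ext ?_ ?_) <;>
      simp [extProduct_apply, twisted_single, -Finsupp.single_mul, -Finsupp.single_sub,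
        -Finsupp.single_neg, -Finsupp.single_add, ← Finsupp.single_sub, ← Finsupp.single_neg] <;>
      ring_nf
  · have h0 : extSign i j = 0 := by simp [extSign, hv]
    simp only [extBasis, hi, hj, hij, AlgebraOf.of_mul_of, commutator₂_apply,
      ← map_sub, cond_true, cond_false, h0, mul_zero, zero_smul]
    rw [map_eq_zero_iff _ (LinearEquiv.injective _), map_eq_zero_iff _ (LinearEquiv.injective _)]
    cases oddDigits i <;> simp [extProduct_apply, twisted_single, h0]

theorem extBasis_mul (i j : ℕ) :
    extBasis K i * extBasis K j = extBracket i j • extBasis K (i ^^^ j) := by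
  have anti := ((ExtAlgebra.isAlternative K).isMalcev K).anticomm
  cases hi : i.testBit 6 <;> cases hj : j.testBit 6
  · simp only [extBasis, extBracket, hi, hj, AlgebraOf.of_mul_of, commutator₂_apply, ← map_sub,
      cond_false, zero_smul]
    simp [extProduct_apply]
  · rw [anti, extBasis_mul_of_testBit K j i hj hi, extBracket, hi, hj, Nat.xor_comm j i]
    simp only [cond_true, cond_false, neg_smul]
  · rw [extBasis_mul_of_testBit K i j hi hj, extBracket, hi, hj]
    simp only [cond_true, cond_false]
  · simp only [extBasis, extBracket, hi, hj, AlgebraOf.of_mul_of, commutator₂_apply, ← map_sub,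
      cond_true, zero_smul]
    cases oddDigits i <;> cases oddDigits j <;> simp [extProduct_apply]

end TestElements

section Words

variable (K : Type) [Field K]

/-- Operators on the space of words, and words. -/
abbrev WordSpace : Type := ((List (Fin 5) →₀ K) →ₗ[K] List (Fin 5) →₀ K) × (List (Fin 5) →₀ K)

/-- The product of the split null extension of the algebra of operators by the space of words. -/
noncomputable def wordProduct : WordSpace K →ₗ[K] WordSpace K →ₗ[K] WordSpace K :=
  LinearMap.mk₂ K (fun p q => (q.1 ∘ₗ p.1, q.1 p.2))
    (fun p p' q => by simp [LinearMap.comp_add]) (fun c p q => by simp [LinearMap.comp_smul])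
    (fun p q q' => by simp [LinearMap.add_comp]) (fun c p q => by simp [LinearMap.smul_comp])

/-- The algebra with product `wordProduct`. -/
abbrev WordAlgebra : Type := AlgebraOf (K := K) (V := WordSpace K) (wordProduct K)

theorem WordAlgebra.associator_eq_zero (a b c : WordAlgebra K) : associator a b c = 0 :=
  sub_eq_zero.2 rfl

theorem WordAlgebra.isAlternative : IsAlternative (WordAlgebra K) where
  swap_left a b c := by simp [associator_eq_zero]
  swap_right a b c := by simp [associator_eq_zero]

/-- The inclusion into the commutator algebra. -/
noncomputable def ofWordSpace : WordSpace K ≃ₗ[K] CommutatorAlgebra K (WordAlgebra K) :=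
  (AlgebraOf.of (K := K) (V := WordSpace K) (wordProduct K)).trans
    (AlgebraOf.of (commutator₂ K (WordAlgebra K)))

theorem ofWordSpace_mul (p q : WordSpace K) : ofWordSpace K p * ofWordSpace K q =
    ofWordSpace K (q.1 ∘ₗ p.1 - p.1 ∘ₗ q.1, q.1 p.2 - p.1 q.2) := rfl

/-- The empty word and the five letters, which act on words by concatenation from the right. -/
noncomputable def wordBasis : Fin 6 → CommutatorAlgebra K (WordAlgebra K) :=
  Fin.cons (ofWordSpace K (0, Finsupp.single [] 1))
    fun i => ofWordSpace K (Finsupp.lmapDomain K K fun l => l ++ [i], 0)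

theorem leftNormed_wordBasis (l : List (Fin 5)) :
    leftNormed (wordBasis K) l = ofWordSpace K (0, Finsupp.single l 1) := by
  induction l using List.reverseRecOn with
  | nil => rfl
  | append_singleton l i ih =>
    rw [leftNormed] at ih ⊢
    rw [List.foldl_append, ih, List.foldl_cons, List.foldl_nil, wordBasis, Fin.cons_succ,
      ofWordSpace_mul]
    refine congrArg (ofWordSpace K) (Prod.ext ?_ ?_)
    · exact LinearMap.ext fun x => by simp [LinearMap.sub_apply]
    · simp

theorem genEval_eq_zero_of_jac {Z : Type} [NonUnitalNonAssocRing Z]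
    (h : ∀ a b c : Z, jac a b c = 0) (z : Fin 6 → Z) (g : GenKind × Split) : genEval z g = 0 := by
  obtain ⟨k, a, b, c, d, e, f⟩ := g
  cases k <;> simp [genEval, symSum, skewSum, h]

theorem genEval_wordBasis (g : GenKind × Split) : genEval (wordBasis K) g = 0 := by
  refine genEval_eq_zero_of_jac (fun a b c => ?_) _ g
  obtain ⟨a, rfl⟩ := (AlgebraOf.of _).surjective a
  obtain ⟨b, rfl⟩ := (AlgebraOf.of _).surjective b
  obtain ⟨c, rfl⟩ := (AlgebraOf.of _).surjective c
  rw [(WordAlgebra.isAlternative K).jac_of K, WordAlgebra.associator_eq_zero, smul_zero, map_zero]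

end Words

section Independence

variable {K : Type} [Field K]

theorem xor_eq_of_mem_splits (x : Fin 6 → ℕ) : ∀ t ∈ splits,
    x t.a ^^^ x t.b ^^^ x t.c ^^^ (x t.d ^^^ x t.e ^^^ x t.f) =
      x 0 ^^^ x 1 ^^^ x 2 ^^^ (x 3 ^^^ x 4 ^^^ x 5) := by
  simp only [splits, List.forall_mem_cons, List.not_mem_nil, IsEmpty.forall_iff, implies_true,
    and_true, true_and]
  refine ⟨?_, ?_, ?_, ?_, ?_, ?_, ?_, ?_, ?_, ?_, ?_, ?_, ?_, ?_, ?_, ?_, ?_, ?_, ?_⟩ <;>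
  ac_rfl

theorem snd_mem_splits : ∀ g ∈ gens, g.2 ∈ splits := by
  intro g hg
  simp only [gens, List.mem_append, List.mem_map, List.mem_filter] at hg
  aesop

/-- A relation between the generators at basis elements of a graded algebra is a relation between
the coefficients. -/
theorem formVal_eq_zero {Z : Type} [NonUnitalNonAssocRing Z] [Module K Z] {B : ℕ → Z}
    {β : ℕ → ℕ → ℤ} (h : ∀ i j, B i * B j = β i j • B (i ^^^ j)) (h0 : ∀ i, B i ≠ 0)
    (x : Fin 6 → ℕ) (d : ℕ → K)
    (hd : ∑ i : Fin gens.length, d i • genEval (fun j => B (x j)) gens[i] = 0) :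
    formVal (gens.map (genCoef β x)) d = 0 := by
  rw [formVal_map]
  have key : ∀ i : Fin gens.length, d i • genEval (fun j => B (x j)) gens[i] =
      ((genCoef β x gens[i] : K) * d i) • B (x 0 ^^^ x 1 ^^^ x 2 ^^^ (x 3 ^^^ x 4 ^^^ x 5)) :=
    fun i => by
      rw [genEval_graded h,
        xor_eq_of_mem_splits x gens[i].2 (snd_mem_splits _ (List.getElem_mem i.2)), ← Int.cast_smul_eq_zsmul K, smul_smul, mul_comm]
  simp only [key, ← Finset.sum_smul] at hd
  exact (smul_eq_zero.1 hd).resolve_right (h0 _)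

/-- The values of the generators in the test algebras are linearly independent. -/
theorem eq_zero_of_test [CharZero K] (d : Fin gens.length → K)
    (oct : ∀ l ∈ octAssignments,
      ∑ i, d i • genEval (fun j => octBasis K (assign l j)) gens[i] = 0)
    (ext : ∀ l ∈ extAssignments,
      ∑ i, d i • genEval (fun j => extBasis K (assign l j)) gens[i] = 0) : d = 0 := by
  set d' : ℕ → K := fun k => if hk : k < gens.length then d ⟨k, hk⟩ else 0 with hd'
  have h1 : ∀ i : Fin gens.length, d' i = d i := fun i => by simp [hd']
  have h2 : d' = 0 := by
    refine eq_zero_of_isNonsingular isNonsingular_testForms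
      (fun k hk => dif_neg (not_lt.2 hk)) fun r hr => ?_
    rcases List.mem_append.1 hr with hr | hr <;> obtain ⟨l, hl, rfl⟩ := List.mem_map.1 hr
    · exact formVal_eq_zero (octBasis_mul K) (octBasis_ne_zero K) _ _
        (by simpa only [h1] using oct l hl)
    · exact formVal_eq_zero (extBasis_mul K) (extBasis_ne_zero K) _ _
        (by simpa only [h1] using ext l hl)
  funext i
  rw [← h1, h2]
  rfl

end Independence

section Products

theorem IsMalcev.prod {Y Z : Type*} [NonUnitalNonAssocRing Y] [NonUnitalNonAssocRing Z]
    (hY : IsMalcev Y) (hZ : IsMalcev Z) : IsMalcev (Y × Z) where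
  anticomm _ _ := Prod.ext (hY.anticomm _ _) (hZ.anticomm _ _)
  three_jac_mul _ _ _ _ := Prod.ext (hY.three_jac_mul _ _ _ _) (hZ.three_jac_mul _ _ _ _)

theorem IsMalcev.pi {ι Z : Type*} [NonUnitalNonAssocRing Z] (hZ : IsMalcev Z) :
    IsMalcev (ι → Z) where
  anticomm _ _ := funext fun _ => hZ.anticomm _ _
  three_jac_mul _ _ _ _ := funext fun _ => hZ.three_jac_mul _ _ _ _

variable {K Y Z : Type} [Field K] [NonUnitalNonAssocRing Y] [Module K Y]
  [NonUnitalNonAssocRing Z] [Module K Z] (φ : Y →ₗ[K] Z)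

theorem map_treeEval (hφ : ∀ a b, φ (a * b) = φ a * φ b) (z : Fin 6 → Y) :
    ∀ t, φ (treeEval z t) = treeEval (fun i => φ (z i)) t
  | .leaf _ => rfl
  | .node s t => by
    have hs := map_treeEval hφ z s
    have ht := map_treeEval hφ z t
    simp only [treeEval, BTree.eval] at hs ht ⊢
    rw [hφ, hs, ht]

theorem map_leftNormed (hφ : ∀ a b, φ (a * b) = φ a * φ b) (z : Fin 6 → Y) (l : List (Fin 5)) :
    φ (leftNormed z l) = leftNormed (fun i => φ (z i)) l := by
  induction l using List.reverseRecOn with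
  | nil => rfl
  | append_singleton l i ih =>
    simp only [leftNormed, List.foldl_append, List.foldl_cons, List.foldl_nil, hφ] at ih ⊢
    rw [ih]

theorem map_genEval (hφ : ∀ a b, φ (a * b) = φ a * φ b) (z : Fin 6 → Y) (g : GenKind × Split) :
    φ (genEval z g) = genEval (fun i => φ (z i)) g := by
  obtain ⟨k, a, b, c, d, e, f⟩ := g
  cases k <;> simp only [genEval, symSum, skewSum, jac, map_add, map_sub, hφ]

end Products

section Transfer

variable {K : Type} [Field K] [CharZero K]

/-- An element of the span of the left-normed words and the generators vanishes if its images in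
the test algebras vanish. -/
theorem eq_zero_of_images {Z : Type} [NonUnitalNonAssocRing Z] [Module K Z] (z : Fin 6 → Z)
    (word : Z →ₗ[K] CommutatorAlgebra K (WordAlgebra K))
    (hword : ∀ a b, word (a * b) = word a * word b) (word_z : ∀ i, word (z i) = wordBasis K i)
    (oct : List ℕ → Z →ₗ[K] CommutatorAlgebra K (OctAlgebra K))
    (hoct : ∀ l a b, oct l (a * b) = oct l a * oct l b)
    (oct_z : ∀ l i, oct l (z i) = octBasis K (assign l i))
    (ext : List ℕ → Z →ₗ[K] CommutatorAlgebra K (ExtAlgebra K))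
    (hext : ∀ l a b, ext l (a * b) = ext l a * ext l b)
    (ext_z : ∀ l i, ext l (z i) = extBasis K (assign l i)) {p : Z}
    (mem : p ∈ Submodule.span K (Set.range (leftNormed z)) ⊔
      Submodule.span K (Set.range fun i : Fin gens.length => genEval z gens[i]))
    (word_p : word p = 0) (oct_p : ∀ l, oct l p = 0) (ext_p : ∀ l, ext l p = 0) : p = 0 := by
  obtain ⟨u, hu, v, hv, rfl⟩ := Submodule.mem_sup.1 mem
  obtain ⟨c, rfl⟩ := Finsupp.mem_span_range_iff_exists_finsupp.1 hu
  obtain ⟨d, rfl⟩ := (Submodule.mem_span_range_iff_exists_fun K).1 hv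
  have hc : c = 0 := by
    rw [map_add, Finsupp.sum, map_sum, map_sum] at word_p
    simp only [map_smul, map_genEval word hword, map_leftNormed word hword, word_z,
      genEval_wordBasis, leftNormed_wordBasis, smul_zero, Finset.sum_const_zero,
      add_zero] at word_p
    have h := congrArg (LinearMap.snd K _ _ ∘ₗ (ofWordSpace K).symm.toLinearMap) word_p
    rw [map_sum] at h
    simp only [map_smul, LinearMap.comp_apply, LinearEquiv.coe_coe, LinearEquiv.symm_apply_apply,
      LinearMap.snd_apply, Finsupp.smul_single, smul_eq_mul, mul_one, map_zero] at h
    exact (Finsupp.sum_single c).symm.trans h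
  subst hc
  simp only [Finsupp.sum_zero_index, zero_add, map_sum, map_smul] at oct_p ext_p
  have hd : d = 0 := by
    refine eq_zero_of_test d (fun l _ => ?_) (fun l _ => ?_)
    · simpa only [map_genEval (oct l) (hoct l), oct_z] using oct_p l
    · simpa only [map_genEval (ext l) (hext l), ext_z] using ext_p l
  simp [hd]

/-- Multilinear identities of degree six in the commutator algebras of alternative algebras hold in
all Malcev algebras. -/
theorem sum_treeEval_eq_zero {E : Type} [NonUnitalNonAssocRing E] [Module K E]
    [IsScalarTower K E E] (hE : IsMalcev E) (P : BTree 6 →₀ K)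
    (hP : ∀ t ∈ P.support, t.Multilinear)
    (h : ∀ (A : Type) [NonUnitalNonAssocRing A] [Module K A] [IsScalarTower K A A]
      [SMulCommClass K A A], IsAlternative A → ∀ a : Fin 6 → CommutatorAlgebra K A,
      (P.sum fun t c => c • treeEval a t) = 0) (x : Fin 6 → E) :
    (P.sum fun t c => c • treeEval x t) = 0 := by
  let Z := E × CommutatorAlgebra K (WordAlgebra K) ×
    (List ℕ → CommutatorAlgebra K (OctAlgebra K)) × (List ℕ → CommutatorAlgebra K (ExtAlgebra K))
  have hZ : IsMalcev Z := hE.prod (((WordAlgebra.isAlternative K).isMalcev K).prod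
    (((OctAlgebra.isAlternative K).isMalcev K).pi.prod
      ((ExtAlgebra.isAlternative K).isMalcev K).pi))
  let z : Fin 6 → Z := fun j => (x j, wordBasis K j, fun l => octBasis K (assign l j),
    fun l => extBasis K (assign l j))
  let word : Z →ₗ[K] CommutatorAlgebra K (WordAlgebra K) :=
    LinearMap.fst K _ _ ∘ₗ LinearMap.snd K _ _
  let oct : List ℕ → Z →ₗ[K] CommutatorAlgebra K (OctAlgebra K) := fun l =>
    LinearMap.proj l ∘ₗ LinearMap.fst K _ _ ∘ₗ LinearMap.snd K _ _ ∘ₗ LinearMap.snd K _ _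
  let ext : List ℕ → Z →ₗ[K] CommutatorAlgebra K (ExtAlgebra K) := fun l =>
    LinearMap.proj l ∘ₗ LinearMap.snd K _ _ ∘ₗ LinearMap.snd K _ _ ∘ₗ LinearMap.snd K _ _
  have map_sum_treeEval : ∀ {Y : Type} [NonUnitalNonAssocRing Y] [Module K Y] (φ : Z →ₗ[K] Y),
      (∀ a b, φ (a * b) = φ a * φ b) → φ (P.sum fun t c => c • treeEval z t) =
        P.sum fun t c => c • treeEval (fun i => φ (z i)) t := fun φ hφ => by
    rw [Finsupp.sum, map_sum]
    exact Finset.sum_congr rfl fun t _ => by rw [map_smul, map_treeEval φ hφ]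
  have hz : (P.sum fun t c => c • treeEval z t) = 0 := by
    refine eq_zero_of_images z word (fun a b => rfl) (fun i => rfl) oct (fun l a b => rfl)
      (fun l i => rfl) ext (fun l a b => rfl) (fun l i => rfl) ?_
      ((map_sum_treeEval word fun a b => rfl).trans (h _ (WordAlgebra.isAlternative K) _))
      (fun l => (map_sum_treeEval (oct l) fun a b => rfl).trans
        (h _ (OctAlgebra.isAlternative K) _))
      (fun l => (map_sum_treeEval (ext l) fun a b => rfl).trans
        (h _ (ExtAlgebra.isAlternative K) _))
    refine Submodule.sum_mem _ fun t ht => Submodule.smul_mem _ _ (treeEval_mem hZ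
      (containsJacobians_of_gens hZ fun g hg => ?_) (fun l => ?_) t (hP t ht))
    · obtain ⟨i, hi, rfl⟩ := List.getElem_of_mem hg
      exact Submodule.mem_sup_right (Submodule.subset_span ⟨⟨i, hi⟩, rfl⟩)
    · exact Submodule.mem_sup_left (Submodule.subset_span ⟨l, rfl⟩)
  have := map_sum_treeEval (LinearMap.fst K _ _) fun a b => rfl
  rw [hz, map_zero] at this
  exact this.symm

end Transfer

namespace BTree

/-- The first variable of a monomial. -/
def leftmost {n : ℕ} : BTree n → Fin n
  | leaf i => i
  | node s _ => leftmost s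

theorem leftmost_mem_vars {n : ℕ} : ∀ t : BTree n, t.leftmost ∈ t.vars
  | leaf i => Multiset.mem_singleton_self i
  | node s _ => Multiset.mem_add.2 (Or.inl (leftmost_mem_vars s))

theorem Multilinear.nodup {n : ℕ} {t : BTree n} (h : t.Multilinear) : t.vars.Nodup := by
  rw [show t.vars = _ from h]
  exact Finset.univ.nodup

end BTree

section Dialgebras

variable {K : Type} [Field K]

/-- The left product of the dialgebra of two copies of an algebra. -/
def leftProduct (K A : Type) [Field K] [NonUnitalNonAssocRing A] [Module K A]
    [IsScalarTower K A A] [SMulCommClass K A A] : A × A →ₗ[K] A × A →ₗ[K] A × A :=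
  LinearMap.mk₂ K (fun p q => (p.1 * q.1, p.2 * q.1)) (fun p p' q => by simp [add_mul])
    (fun c p q => by simp [smul_mul_assoc]) (fun p q q' => by simp [mul_add])
    (fun c p q => by simp [mul_smul_comm])

/-- The right product of the dialgebra of two copies of an algebra. -/
def rightProduct (K A : Type) [Field K] [NonUnitalNonAssocRing A] [Module K A]
    [IsScalarTower K A A] [SMulCommClass K A A] : A × A →ₗ[K] A × A →ₗ[K] A × A :=
  LinearMap.mk₂ K (fun p q => (p.1 * q.1, p.1 * q.2)) (fun p p' q => by simp [add_mul])
    (fun c p q => by simp [smul_mul_assoc]) (fun p q q' => by simp [mul_add])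
    (fun c p q => by simp [mul_smul_comm])

section

variable {A : Type} [NonUnitalNonAssocRing A] [Module K A] [IsScalarTower K A A]
  [SMulCommClass K A A] (i : Fin 6) (a : Fin 6 → A)

theorem eval_dicommutator : ∀ t : BTree 6, t.vars.Nodup →
    t.eval (fun p q => leftProduct K A p q - rightProduct K A q p)
        (fun j => if j = i then (0, a j) else (a j, 0)) =
      (if i ∈ t.vars then 0 else t.eval (fun p q => p * q - q * p) a,
        if t.leftmost = i then t.eval (fun p q => p * q - q * p) a else 0)
  | .leaf j, _ => by
    rcases eq_or_ne j i with rfl | h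
    · simp [BTree.eval, BTree.vars, BTree.leftmost]
    · simp [BTree.eval, BTree.vars, BTree.leftmost, h, h.symm]
  | .node s t, h => by
    rw [BTree.vars, Multiset.nodup_add] at h
    have hst : s.leftmost = i → i ∉ t.vars := fun hs =>
      Multiset.disjoint_left.1 h.2.2 (hs ▸ s.leftmost_mem_vars)
    rw [BTree.eval, eval_dicommutator s h.1, eval_dicommutator t h.2.1]
    simp only [leftProduct, rightProduct, LinearMap.mk₂_apply, Prod.mk_sub_mk, BTree.vars,
      BTree.leftmost, Multiset.mem_add, BTree.eval]
    refine Prod.ext ?_ ?_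
    · by_cases h1 : i ∈ s.vars <;> by_cases h2 : i ∈ t.vars <;> simp [h1, h2]
    · by_cases h1 : s.leftmost = i
      · simp [h1, hst h1]
      · simp [h1]

theorem IsAlternative.add_swap (h : IsAlternative A) (a b c : A) :
    associator a b c + associator a c b = 0 := by
  rw [h.swap_right a b c, add_neg_cancel]

theorem IsAlternative.sub_rotate (h : IsAlternative A) (a b c : A) :
    associator a b c - associator b c a = 0 := by
  rw [h.swap_right b a c, h.swap_left a b c, neg_neg, sub_self]

theorem IsAlternative.add_reverse (h : IsAlternative A) (a b c : A) :
    associator a b c + associator c b a = 0 := by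
  rw [h.swap_left b c a, h.swap_right b a c, h.swap_left a b c, neg_neg, add_neg_cancel]

theorem treeEval_of : ∀ t : BTree 6,
    treeEval (fun j => AlgebraOf.of (commutator₂ K A) (a j)) t =
      AlgebraOf.of (commutator₂ K A) (t.eval (fun p q => p * q - q * p) a)
  | .leaf _ => rfl
  | .node s t => congrArg₂ (· * ·) (treeEval_of s) (treeEval_of t)

end

section Malcev

variable {M : Type} [AddCommGroup M] [Module K M] (f : M →ₗ[K] M →ₗ[K] M)

/-- The quotient of a dialgebra by its right annihilator. -/
abbrev AnnQuotient : Type := M ⧸ LinearMap.ker f.flip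

/-- The action of the quotient from the right. -/
def quotientAction : M →ₗ[K] AnnQuotient f →ₗ[K] M :=
  ((LinearMap.ker f.flip).liftQ f.flip le_rfl).flip

variable {f}

theorem apply_mem_ker (hf : ∀ a b c : M, f a (f b c) + f a (f c b) = 0) {a : M}
    (ha : a ∈ LinearMap.ker f.flip) (b : M) : f a b ∈ LinearMap.ker f.flip := by
  have h : ∀ c, f c a = 0 := fun c => LinearMap.congr_fun (LinearMap.mem_ker.1 ha) c
  refine LinearMap.mem_ker.2 (LinearMap.ext fun c => ?_)
  have := hf c a b
  rwa [h, map_zero, add_zero] at this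

/-- The product of the quotient. -/
def quotientProduct (hf : ∀ a b c : M, f a (f b c) + f a (f c b) = 0) :
    AnnQuotient f →ₗ[K] AnnQuotient f →ₗ[K] AnnQuotient f :=
  (LinearMap.ker f.flip).liftQ ((quotientAction f).compr₂ (LinearMap.ker f.flip).mkQ)
    fun a ha => LinearMap.mem_ker.2 (LinearMap.ext fun b => by
      obtain ⟨b, rfl⟩ := Submodule.Quotient.mk_surjective _ b
      exact (Submodule.Quotient.mk_eq_zero _).2 (apply_mem_ker hf ha b))

/-- The product of the split null extension of the quotient by the dialgebra. -/
def malcevProduct (hf : ∀ a b c : M, f a (f b c) + f a (f c b) = 0) :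
    AnnQuotient f × M →ₗ[K] AnnQuotient f × M →ₗ[K] AnnQuotient f × M :=
  LinearMap.mk₂ K (fun p q => (quotientProduct hf p.1 q.1,
      quotientAction f p.2 q.1 - quotientAction f q.2 p.1))
    (fun p p' q => by
      refine Prod.ext (by simp) ?_
      simp only [Prod.snd_add, Prod.fst_add, map_add, LinearMap.add_apply]
      abel)
    (fun c p q => by simp [smul_sub])
    (fun p q q' => by
      refine Prod.ext (by simp) ?_
      simp only [Prod.snd_add, Prod.fst_add, map_add, LinearMap.add_apply]
      abel)
    (fun c p q => by simp [smul_sub])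

/-- The algebra with product `malcevProduct`. -/
abbrev MalcevAlgebra (hf : ∀ a b c : M, f a (f b c) + f a (f c b) = 0) : Type :=
  AlgebraOf (malcevProduct hf)

/-- The element of the Malcev algebra given by two elements of the dialgebra. -/
def ofPair (hf : ∀ a b c : M, f a (f b c) + f a (f c b) = 0) (a u : M) : MalcevAlgebra hf :=
  AlgebraOf.of (malcevProduct hf) (Submodule.Quotient.mk a, u)

theorem ofPair_mul (hf : ∀ a b c : M, f a (f b c) + f a (f c b) = 0) (a u b v : M) :
    ofPair hf a u * ofPair hf b v = ofPair hf (f a b) (f u b - f v a) := rfl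

theorem ofPair_surjective (hf : ∀ a b c : M, f a (f b c) + f a (f c b) = 0)
    (x : MalcevAlgebra hf) : ∃ a u, x = ofPair hf a u := by
  obtain ⟨⟨a, u⟩, rfl⟩ := (AlgebraOf.of (malcevProduct hf)).surjective x
  obtain ⟨a, rfl⟩ := Submodule.Quotient.mk_surjective _ a
  exact ⟨a, u, rfl⟩

theorem ofPair_eq (hf : ∀ a b c : M, f a (f b c) + f a (f c b) = 0) {a b u v : M}
    (h : ∀ e, f e a = f e b) (huv : u = v) : ofPair hf a u = ofPair hf b v := by
  subst huv
  refine congrArg (fun a => AlgebraOf.of (malcevProduct hf) (a, u))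
    ((Submodule.Quotient.eq _).2 (LinearMap.mem_ker.2 (LinearMap.ext fun e => ?_)))
  rw [LinearMap.flip_apply, map_sub, h, sub_self, LinearMap.zero_apply]

theorem MalcevAlgebra.isMalcev (hf : ∀ a b c : M, f a (f b c) + f a (f c b) = 0)
    (malcev : ∀ a b c d : M, f (f (f a b) c) d - f (f (f a d) b) c - f (f a (f c d)) b
      - f (f a c) (f b d) - f a (f (f b c) d) = 0) : IsMalcev (MalcevAlgebra hf) := by
  have add : ∀ a b u v : M, ofPair hf a u + ofPair hf b v = ofPair hf (a + b) (u + v) :=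
    fun _ _ _ _ => rfl
  have neg : ∀ a u : M, -ofPair hf a u = ofPair hf (-a) (-u) := fun _ _ => rfl
  have swap : ∀ a b c : M, f a (f b c) = -f a (f c b) := fun a b c =>
    eq_neg_of_add_eq_zero_left (hf a b c)
  have swap₂ : ∀ a b c d : M, f a (f (f b c) d) = -f a (f (f c b) d) := fun a b c d => by
    rw [swap a _ d, swap d b c, map_neg, neg_neg, swap a d]
  have swap₃ : ∀ a b c d e : M, f a (f (f (f b c) d) e) = -f a (f (f (f c b) d) e) :=
    fun a b c d e => by
      rw [swap a _ e, swap₂ e b c, map_neg, neg_neg, swap a e]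
  refine isMalcev_of_sagle (fun x y => ?_) fun x y z o => ?_
  · obtain ⟨a, u, rfl⟩ := ofPair_surjective hf x
    obtain ⟨b, v, rfl⟩ := ofPair_surjective hf y
    rw [ofPair_mul, ofPair_mul, neg]
    exact ofPair_eq hf (fun e => by rw [map_neg, swap]) (neg_sub _ _).symm
  · obtain ⟨a, u, rfl⟩ := ofPair_surjective hf x
    obtain ⟨b, v, rfl⟩ := ofPair_surjective hf y
    obtain ⟨c, w, rfl⟩ := ofPair_surjective hf z
    obtain ⟨d, s, rfl⟩ := ofPair_surjective hf o
    simp only [ofPair_mul, add]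
    refine ofPair_eq hf (fun e => ?_) ?_
    · have h := congrArg (f e) (malcev a b c d)
      simp only [map_add, map_sub, map_zero] at h ⊢
      rw [swap e _ a, swap₂ e _ a, swap₃ e d a]
      linear_combination (norm := abel) -h
    · have h₁ := malcev u b c d
      have h₂ := malcev v c d a
      have h₃ := malcev w d a b
      have h₄ := malcev s a b c
      simp only [map_sub, LinearMap.sub_apply]
      rw [swap (f v d) a c, swap (f w a) b d]
      linear_combination (norm := abel) -h₁ - h₂ - h₃ - h₄

section

variable (hf : ∀ a b c : M, f a (f b c) + f a (f c b) = 0) (i : Fin 6) (x : Fin 6 → M)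

theorem treeEval_ofPair_of_notMem : ∀ t : BTree 6, i ∉ t.vars →
    treeEval (fun j => if j = i then ofPair hf 0 (x j) else ofPair hf (x j) 0) t =
      ofPair hf (t.eval (fun a b => f a b) x) 0
  | .leaf j, h => if_neg fun hj => h (Multiset.mem_singleton.2 hj.symm)
  | .node s t, h => by
    rw [BTree.vars, Multiset.mem_add, not_or] at h
    refine (congrArg₂ (· * ·) (treeEval_ofPair_of_notMem s h.1)
      (treeEval_ofPair_of_notMem t h.2)).trans ((ofPair_mul ..).trans ?_)
    rw [map_zero, LinearMap.zero_apply, LinearMap.zero_apply, sub_zero]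
    rfl

theorem treeEval_ofPair_of_leftmost : ∀ t : BTree 6, t.vars.Nodup → t.leftmost = i →
    treeEval (fun j => if j = i then ofPair hf 0 (x j) else ofPair hf (x j) 0) t =
      ofPair hf 0 (t.eval (fun a b => f a b) x)
  | .leaf j, _, h => if_pos h
  | .node s t, hn, h => by
    rw [BTree.vars, Multiset.nodup_add] at hn
    have ht : i ∉ t.vars := Multiset.disjoint_left.1 hn.2.2
      ((show s.leftmost = i from h) ▸ s.leftmost_mem_vars)
    refine (congrArg₂ (· * ·) (treeEval_ofPair_of_leftmost s hn.1 h)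
      (treeEval_ofPair_of_notMem hf i x t ht)).trans ((ofPair_mul ..).trans ?_)
    rw [map_zero, map_zero, LinearMap.zero_apply, sub_zero]
    rfl

end

end Malcev

theorem sum_filter_leftmost {Y : Type} [AddCommGroup Y] [Module K Y] (P : BTree 6 →₀ K)
    (i : Fin 6) (g : BTree 6 → Y) :
    ((P.filter fun t => t.leftmost = i).sum fun t k => k • g t) =
      ∑ t ∈ P.support with t.leftmost = i, P t • g t := by
  rw [Finsupp.sum, Finsupp.support_filter]
  exact Finset.sum_congr rfl fun t ht => by
    rw [Finsupp.filter_apply_pos (fun t : BTree 6 => t.leftmost = i) P (Finset.mem_filter.1 ht).2]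

theorem multilinear_of_mem_filter {P : BTree 6 →₀ K} (hP : ∀ t ∈ P.support, t.Multilinear)
    (i : Fin 6) : ∀ t ∈ (P.filter fun t => t.leftmost = i).support, t.Multilinear := fun t ht => by
  rw [Finsupp.support_filter] at ht
  exact hP t (Finset.mem_filter.1 ht).1

end Dialgebras

/-- Over a field `K` of characteristic 0, every multilinear polynomial identity `P` of degree 6 satisfied by the dicommutator in every alternative dialgebra over `K` is satisfied in every Malcev dialgebra over `K`; there are no special identities for Malcev dialgebras in degree 6, so any special identity must have degree at least 7. -/
theorem degree6_no_special_identities (K : Type) [Field K]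
    [CharZero K]
    (P : BTree 6 →₀ K) (hml : ∀ t ∈ P.support, t.Multilinear)
    (hvanish : ∀ (D : Type) [AddCommGroup D] [Module K D]
      (l r : D →ₗ[K] D →ₗ[K] D),
      (∀ a b c : D, r (l a b) c = r (r a b) c) →
      (∀ a b c : D, l a (l b c) = l a (r b c)) →
      (∀ a b c : D, (l (l a b) c - l a (l b c)) + (r (r c b) a - r c (r b a)) = 0) →
      (∀ a b c : D, (l (l a b) c - l a (l b c)) - (r (r b c) a - r b (r c a)) = 0) →
      (∀ a b c : D, (l (r a b) c - r a (l b c)) + (r (r a c) b - r a (r c b)) = 0) →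
      ∀ x : Fin 6 → D,
        P.sum (fun t k => k • BTree.eval (fun a b => l a b - r b a) x t) = 0) :
    ∀ (M : Type) [AddCommGroup M] [Module K M] (f : M →ₗ[K] M →ₗ[K] M),
      (∀ a b c : M, f a (f b c) + f a (f c b) = 0) →
      (∀ a b c d : M,
        f (f (f a b) c) d - f (f (f a d) b) c - f (f a (f c d)) b
          - f (f a c) (f b d) - f a (f (f b c) d) = 0) →
      ∀ x : Fin 6 → M,
        P.sum (fun t k => k • BTree.eval (fun a b => f a b) x t) = 0 := by
  intro M _ _ f hf malcev x
  have key : ∀ i, ∑ t ∈ P.support with t.leftmost = i,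
      P t • BTree.eval (fun a b => f a b) x t = 0 := fun i => by
    have h := sum_treeEval_eq_zero (MalcevAlgebra.isMalcev hf malcev)
      (P.filter fun t => t.leftmost = i)
      (multilinear_of_mem_filter hml i)
      (fun A _ _ _ _ hA a => ?_) fun j => if j = i then ofPair hf 0 (x j) else ofPair hf (x j) 0
    · rw [sum_filter_leftmost] at h
      have h1 := congrArg (LinearMap.snd K _ _ ∘ₗ
        (AlgebraOf.of (malcevProduct hf)).symm.toLinearMap) h
      rw [map_sum, map_zero] at h1
      rw [← h1]
      refine Finset.sum_congr rfl fun t ht => ?_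
      rw [treeEval_ofPair_of_leftmost hf i x t (hml t (Finset.mem_filter.1 ht).1).nodup
        (Finset.mem_filter.1 ht).2]
      rfl
    · obtain ⟨b, rfl⟩ : ∃ b : Fin 6 → A, a = fun j => AlgebraOf.of (commutator₂ K A) (b j) :=
        ⟨a, rfl⟩
      have h1 := congrArg (LinearMap.snd K A A) (hvanish (A × A) (leftProduct K A)
        (rightProduct K A) (fun _ _ _ => rfl) (fun _ _ _ => rfl)
        (fun p q r => Prod.ext (hA.add_reverse _ _ _) (hA.add_reverse _ _ _))
        (fun p q r => Prod.ext (hA.sub_rotate _ _ _) (hA.sub_rotate _ _ _))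
        (fun p q r => Prod.ext (hA.add_swap _ _ _) (hA.add_swap _ _ _))
        fun j => if j = i then (0, b j) else (b j, 0))
      rw [Finsupp.sum, map_sum, map_zero] at h1
      have h3 := congrArg (AlgebraOf.of (commutator₂ K A)) h1
      rw [map_sum, map_zero] at h3
      rw [sum_filter_leftmost, Finset.sum_filter]
      refine Eq.trans (Finset.sum_congr rfl fun t ht => ?_) h3
      rw [eval_dicommutator i b t (hml t ht).nodup, treeEval_of]
      split_ifs <;> simp
  rw [Finsupp.sum, ← Finset.sum_fiberwise P.support BTree.leftmost]
  exact Finset.sum_eq_zero fun i _ => key i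
end

section
/- Let K be a field of characteristic 0 and let c_σ ∈ K for each of the six permutations σ of three variables. Suppose that in every Malcev dialgebra M over K, the sum over all six permutations σ of c_σ·⟨x_{σ(1)}, x_{σ(2)}, x_{σ(3)}⟩ vanishes for all x_1, x_2, x_3 ∈ M, where ⟨a,b,c⟩ = 2(ab)c + a(bc) + (ac)b. Then c_σ = 0 for every σ; that is, the trilinear operation ⟨a,b,c⟩ satisfies no polynomial identity in degree 3. -/
/-- The bilinear product on `K³ × K × K` whose only nonzero products of basis vectors are
`e₀ e₁ = p` and `p e₂ = q`. -/
def pathProduct (K : Type) [Field K] :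
    ((Fin 3 → K) × K × K) →ₗ[K] ((Fin 3 → K) × K × K) →ₗ[K] ((Fin 3 → K) × K × K) :=
  LinearMap.mk₂ K (fun a b => (0, a.1 0 * b.1 1, a.2.1 * b.1 2))
    (by intros; ext <;> simp [add_mul])
    (by intros; ext <;> simp [mul_assoc])
    (by intros; ext <;> simp [mul_add])
    (by intros; ext <;> simp [mul_left_comm])

theorem pathProduct_apply (K : Type) [Field K] (a b : (Fin 3 → K) × K × K) :
    pathProduct K a b = (0, a.1 0 * b.1 1, a.2.1 * b.1 2) :=
  rfl

theorem perm_fin_three_eq_one_iff (ρ : Equiv.Perm (Fin 3)) :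
    ρ = 1 ↔ ρ 0 = 0 ∧ ρ 1 = 1 ∧ ρ 2 = 2 := by
  revert ρ; decide

theorem perm_fin_three_eq_swap_iff (ρ : Equiv.Perm (Fin 3)) :
    ρ = Equiv.swap 1 2 ↔ ρ 0 = 0 ∧ ρ 2 = 1 ∧ ρ 1 = 2 := by
  revert ρ; decide

theorem single_mul_single_mul_single (K : Type) [Field K] (i j k : Fin 3) :
    (Pi.single i 1 : Fin 3 → K) 0 * (Pi.single j 1 : Fin 3 → K) 1 *
      (Pi.single k 1 : Fin 3 → K) 2 = if i = 0 ∧ j = 1 ∧ k = 2 then 1 else 0 := by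
  simp only [Pi.single_apply, eq_comm (b := i), eq_comm (b := j), eq_comm (b := k)]
  split_ifs <;> simp_all

/-- Over a field `K` of characteristic 0, if coefficients
`c σ ∈ K` (one for each permutation of three variables) are such that
`∑ σ, c σ • ⟨x (σ 0), x (σ 1), x (σ 2)⟩ = 0` holds in every Malcev dialgebra
over `K`, where `⟨a,b,c⟩ = 2(ab)c + a(bc) + (ac)b`, then all `c σ = 0`;
the trilinear operation satisfies no polynomial identity in degree 3. -/
theorem no_degree3_identity_for_trilinear_op (K : Type) [Field K] [CharZero K]
    (c : Equiv.Perm (Fin 3) → K)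
    (h : ∀ (M : Type) [AddCommGroup M] [Module K M]
      (f : M →ₗ[K] M →ₗ[K] M),
      (∀ a b c : M, f a (f b c) + f a (f c b) = 0) →
      (∀ a b c d : M,
        f (f (f a b) c) d - f (f (f a d) b) c - f (f a (f c d)) b
          - f (f a c) (f b d) - f a (f (f b c) d) = 0) →
      ∀ x : Fin 3 → M,
        ∑ σ : Equiv.Perm (Fin 3),
          c σ • ((2 : K) • f (f (x (σ 0)) (x (σ 1))) (x (σ 2))
              + f (x (σ 0)) (f (x (σ 1)) (x (σ 2)))
              + f (f (x (σ 0)) (x (σ 2))) (x (σ 1))) = 0) :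
    ∀ σ : Equiv.Perm (Fin 3), c σ = 0 := by
  have key (τ : Equiv.Perm (Fin 3)) : 2 * c τ + c (τ * Equiv.swap 1 2) = 0 := by
    have hsum := h _ (pathProduct K) (by intros; simp [pathProduct_apply])
      (by intros; simp [pathProduct_apply]) (fun i => (Pi.single (τ.symm i) 1, 0, 0))
    rw [← Equiv.sum_comp (Equiv.mulLeft τ)] at hsum
    have hq := congrArg (fun m => m.2.2) hsum
    simp only [pathProduct_apply, Prod.snd_sum, Equiv.coe_mulLeft, Equiv.Perm.mul_apply,
      Equiv.symm_apply_apply, Prod.smul_snd, Prod.snd_add, single_mul_single_mul_single,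
      ← perm_fin_three_eq_one_iff, ← perm_fin_three_eq_swap_iff] at hq
    simpa [mul_add, Finset.sum_add_distrib, mul_comm] using hq
  intro σ
  have h₁ := key σ
  have h₂ := key (σ * Equiv.swap 1 2)
  rw [mul_assoc, Equiv.swap_mul_self, mul_one] at h₂
  have h₃ : (3 : K) * c σ = 0 := by linear_combination 2 * h₁ - h₂
  simpa using h₃
end

section
/- Let K be a field of characteristic not 2 and let M be a Malcev dialgebra over K which is generated as an algebra by a single element a (i.e., the smallest K-linear subspace of M containing a and closed under the product is M itself). Then M satisfies the Leibniz identity: (xy)z = (xz)y + x(yz) for all x,y,z ∈ M. -/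
/-- In a right anticommutative algebra over a field of characteristic not 2, squares lie in the
right annihilator. -/
lemma apply_square_eq_zero_of_right_anticomm {K M : Type*} [Field K] [AddCommGroup M] [Module K M]
    (h2 : (2 : K) ≠ 0) (f : M →ₗ[K] M →ₗ[K] M)
    (hra : ∀ a b c : M, f a (f b c) + f a (f c b) = 0) (m a : M) : f m (f a a) = 0 := by
  have h : (2 : K) • f m (f a a) = 0 := by rw [two_smul, hra]
  exact (smul_eq_zero.mp h).resolve_left h2

/-- In a right anticommutative algebra over a field of characteristic not 2 generated by `a`,
every element is a multiple of `a` plus an element of the right annihilator. -/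
lemma exists_smul_add_of_right_anticomm {K M : Type*} [Field K] [AddCommGroup M] [Module K M]
    (h2 : (2 : K) ≠ 0) (f : M →ₗ[K] M →ₗ[K] M)
    (hra : ∀ a b c : M, f a (f b c) + f a (f c b) = 0) (a : M)
    (hgen : ∀ p : Submodule K M, a ∈ p → (∀ x ∈ p, ∀ y ∈ p, f x y ∈ p) → p = ⊤) (x : M) :
    ∃ (k : K) (z : M), (∀ m, f m z = 0) ∧ x = k • a + z := by
  have haa (m : M) : f m (f a a) = 0 :=
    apply_square_eq_zero_of_right_anticomm h2 f hra m a
  let p : Submodule K M :=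
    { carrier := {x | ∃ (k : K) (z : M), (∀ m, f m z = 0) ∧ x = k • a + z}
      zero_mem' := ⟨0, 0, by simp, by simp⟩
      add_mem' := by
        rintro _ _ ⟨k, z, hz, rfl⟩ ⟨l, w, hw, rfl⟩
        exact ⟨k + l, z + w, by simp [hz, hw], by module⟩
      smul_mem' := by
        rintro c _ ⟨k, z, hz, rfl⟩
        exact ⟨c * k, c • z, by simp [hz], by module⟩ }
  have hp : p = ⊤ := by
    refine hgen p ⟨1, 0, by simp, by simp⟩ ?_
    rintro _ ⟨k, z, hz, rfl⟩ _ ⟨l, w, hw, rfl⟩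
    have hza (m : M) : f m (f z a) = 0 := by simpa [hz] using hra m z a
    exact ⟨0, f (k • a + z) (l • a + w), by simp [hw, haa, hza], by simp⟩
  exact (hp ▸ Submodule.mem_top : x ∈ p)

/-- Over a field `K` of characteristic not 2, every Malcev
dialgebra `M` generated as an algebra by a single element `a` (the smallest
`K`-linear subspace of `M` containing `a` and closed under the product is `M`
itself) satisfies the Leibniz identity `(xy)z = (xz)y + x(yz)`. -/
theorem one_generated_malcev_dialgebra_is_leibniz (K : Type) [Field K]
    (h2 : (2 : K) ≠ 0)
    (M : Type) [AddCommGroup M] [Module K M]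
    (f : M →ₗ[K] M →ₗ[K] M)
    (hra : ∀ a b c : M, f a (f b c) + f a (f c b) = 0)
    (hdm : ∀ a b c d : M,
      f (f (f a b) c) d - f (f (f a d) b) c - f (f a (f c d)) b
        - f (f a c) (f b d) - f a (f (f b c) d) = 0)
    (a : M)
    (hgen : ∀ p : Submodule K M, a ∈ p →
      (∀ x ∈ p, ∀ y ∈ p, f x y ∈ p) → p = ⊤) :
    ∀ x y z : M, f (f x y) z = f (f x z) y + f x (f y z) := by
  intro x y z
  obtain ⟨i, u, hu, rfl⟩ := exists_smul_add_of_right_anticomm h2 f hra a hgen x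
  obtain ⟨k, v, hv, rfl⟩ := exists_smul_add_of_right_anticomm h2 f hra a hgen y
  obtain ⟨l, w, hw, rfl⟩ := exists_smul_add_of_right_anticomm h2 f hra a hgen z
  have haa (m : M) : f m (f a a) = 0 :=
    apply_square_eq_zero_of_right_anticomm h2 f hra m a
  have hva (m : M) : f m (f v a) = 0 := by simpa [hv] using hra m v a
  simp only [map_add, map_smul, LinearMap.add_apply, LinearMap.smul_apply, hv, hw, haa, hva,
    smul_zero, add_zero]
  module
end

section
/- Let K be a field and let A be the K-vector space with basis {e_n : n ≥ 1} equipped with the bilinear product determined by e_n·e_1 = e_{n+1} and e_n·e_m = 0 for all m ≥ 2. Then A satisfies right anticommutativity x(yz) + x(zy) = 0, the di-Malcev identity ((xy)z)w − ((xw)y)z − (x(zw))y − (xz)(yw) − x((yz)w) = 0, and the Leibniz identity (xy)z = (xz)y + x(yz), for all x,y,z,w ∈ A. -/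
/-- The basis vector `e n` of the `K`-vector space with basis `{e_n : n ≥ 1}`
(realized as finitely supported functions `ℕ+ →₀ K`). -/
noncomputable def eVec (K : Type) [Field K] (n : ℕ+) : ℕ+ →₀ K := Finsupp.single n 1

/-- A bilinear product with `e_n·e_m = 0` for `m ≥ 2` sees only the `e_1`-coordinate of its
right factor. -/
theorem mul_eq_coord_one_smul {K : Type} [Field K]
    (f : (ℕ+ →₀ K) →ₗ[K] (ℕ+ →₀ K) →ₗ[K] (ℕ+ →₀ K))
    (hmul0 : ∀ n m : ℕ+, 2 ≤ m → f (eVec K n) (eVec K m) = 0) (x y : ℕ+ →₀ K) :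
    f x y = y 1 • f x (eVec K 1) := by
  have h : f.flip = (Finsupp.lapply 1 : (ℕ+ →₀ K) →ₗ[K] K).smulRight (f.flip (eVec K 1)) := by
    ext m n : 4
    rcases eq_or_ne m 1 with rfl | hm
    · simp [eVec]
    · have hm2 : 2 ≤ m := by
        have h1 : (1 : ℕ+) < m := lt_of_le_of_ne one_le hm.symm
        exact PNat.add_one_le_iff.mpr h1
      simpa [eVec, hm, Finsupp.single_apply] using hmul0 n m hm2
  exact LinearMap.congr_fun (LinearMap.congr_fun h y) x

/-- Products have no `e_1`-component. -/
theorem mul_apply_one {K : Type} [Field K]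
    (f : (ℕ+ →₀ K) →ₗ[K] (ℕ+ →₀ K) →ₗ[K] (ℕ+ →₀ K))
    (hmul1 : ∀ n : ℕ+, f (eVec K n) (eVec K 1) = eVec K (n + 1))
    (hmul0 : ∀ n m : ℕ+, 2 ≤ m → f (eVec K n) (eVec K m) = 0) (x y : ℕ+ →₀ K) :
    f x y 1 = 0 := by
  have h : Finsupp.lapply 1 ∘ₗ f.flip (eVec K 1) = (0 : (ℕ+ →₀ K) →ₗ[K] K) := by
    ext n
    have hn : n + 1 ≠ 1 := (PNat.lt_add_left 1 n).ne'
    have := hmul1 n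
    simp only [eVec] at this
    simp [eVec, this, hn]
  have hx : f x (eVec K 1) 1 = 0 := LinearMap.congr_fun h x
  rw [mul_eq_coord_one_smul f hmul0, Finsupp.smul_apply, hx, smul_zero]

/-- Let `A` be the `K`-vector space with basis `{e_n : n ≥ 1}`
equipped with the bilinear product determined by `e_n·e_1 = e_{n+1}` and
`e_n·e_m = 0` for `m ≥ 2`.  Then `A` satisfies right anticommutativity,
the di-Malcev identity, and the Leibniz identity. -/
theorem free_one_generated_structure (K : Type) [Field K]
    (f : (ℕ+ →₀ K) →ₗ[K] (ℕ+ →₀ K) →ₗ[K] (ℕ+ →₀ K))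
    (hmul1 : ∀ n : ℕ+, f (eVec K n) (eVec K 1) = eVec K (n + 1))
    (hmul0 : ∀ n m : ℕ+, 2 ≤ m → f (eVec K n) (eVec K m) = 0) :
    (∀ x y z : ℕ+ →₀ K, f x (f y z) + f x (f z y) = 0) ∧
    (∀ x y z w : ℕ+ →₀ K,
      f (f (f x y) z) w - f (f (f x w) y) z - f (f x (f z w)) y
        - f (f x z) (f y w) - f x (f (f y z) w) = 0) ∧
    (∀ x y z : ℕ+ →₀ K, f (f x y) z = f (f x z) y + f x (f y z)) := by
  have hmul (x y) : f x y = y 1 • f x (eVec K 1) := mul_eq_coord_one_smul f hmul0 x y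
  have hzero (x y z) : f x (f y z) = 0 := by
    rw [hmul, mul_apply_one f hmul1 hmul0, zero_smul]
  have hcomm (x y z) : f (f x y) z = f (f x z) y := by
    rw [hmul _ z, hmul x y, hmul _ y, hmul x z]
    simp only [map_smul, LinearMap.smul_apply]
    exact smul_comm _ _ _
  refine ⟨fun x y z => by simp [hzero], fun x y z w => ?_, fun x y z => ?_⟩
  · rw [hcomm (f x y) z w, hcomm x y w]
    simp [hzero]
  · rw [hzero, add_zero, hcomm]
end

section
/- There exist a Malcev dialgebra M over ℚ generated as an algebra by two elements, and elements x, y, z ∈ M, such that (xy)z ≠ (xz)y + x(yz). In other words, not every two-generated Malcev dialgebra is a Leibniz algebra. -/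
/-- A (right) Malcev dialgebra over `ℚ`: a `ℚ`-vector space with a bilinear
product satisfying right anticommutativity and the di-Malcev identity. -/
structure MalcevDialgebraQ where
  carrier : Type
  [addCommGroup : AddCommGroup carrier]
  [module : Module ℚ carrier]
  mul : carrier →ₗ[ℚ] carrier →ₗ[ℚ] carrier
  right_anti : ∀ a b c : carrier, mul a (mul b c) + mul a (mul c b) = 0
  di_malcev : ∀ a b c d : carrier,
    mul (mul (mul a b) c) d - mul (mul (mul a d) b) c - mul (mul a (mul c d)) b
      - mul (mul a c) (mul b d) - mul a (mul (mul b c) d) = 0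

attribute [instance] MalcevDialgebraQ.addCommGroup MalcevDialgebraQ.module

/-- The bilinear product on `ℚ⁴` with basis `a, b, c, d` whose only nonzero products of basis
vectors are `ab = c` and `ca = d`. -/
def nilpotentMul : (Fin 4 → ℚ) →ₗ[ℚ] (Fin 4 → ℚ) →ₗ[ℚ] (Fin 4 → ℚ) :=
  LinearMap.mk₂ ℚ (fun x y => ![0, 0, x 0 * y 1, x 2 * y 0])
    (fun x x' y => by ext i; fin_cases i <;> simp [add_mul])
    (fun r x y => by ext i; fin_cases i <;> simp [mul_assoc])
    (fun x y y' => by ext i; fin_cases i <;> simp [mul_add])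
    (fun r x y => by ext i; fin_cases i <;> simp [mul_left_comm])

theorem nilpotentMul_apply (x y : Fin 4 → ℚ) :
    nilpotentMul x y = ![0, 0, x 0 * y 1, x 2 * y 0] := rfl

/-- The four-dimensional algebra with product `nilpotentMul`; all products of four elements
vanish, so the di-Malcev identity holds trivially. -/
def nilpotentMalcevDialgebra : MalcevDialgebraQ where
  carrier := Fin 4 → ℚ
  mul := nilpotentMul
  right_anti a b c := by ext i; fin_cases i <;> simp [nilpotentMul_apply]
  di_malcev a b c d := by ext i; fin_cases i <;> simp [nilpotentMul_apply]

theorem eq_top_of_nilpotentMul_closed (p : Submodule ℚ (Fin 4 → ℚ))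
    (ha : ![1, 0, 0, 0] ∈ p) (hb : ![0, 1, 0, 0] ∈ p)
    (hmul : ∀ x ∈ p, ∀ y ∈ p, nilpotentMul x y ∈ p) : p = ⊤ := by
  have hc : ![0, 0, 1, 0] ∈ p := by
    simpa [nilpotentMul_apply] using hmul _ ha _ hb
  have hd : ![0, 0, 0, 1] ∈ p := by
    simpa [nilpotentMul_apply] using hmul _ hc _ ha
  refine eq_top_iff.2 fun v _ => ?_
  have hv : v = v 0 • ![1, 0, 0, 0] + v 1 • ![0, 1, 0, 0] + v 2 • ![0, 0, 1, 0]
      + v 3 • ![0, 0, 0, 1] := by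
    ext i; fin_cases i <;> simp
  rw [hv]
  exact p.add_mem (p.add_mem (p.add_mem (p.smul_mem _ ha) (p.smul_mem _ hb))
    (p.smul_mem _ hc)) (p.smul_mem _ hd)

/-- There exist a Malcev dialgebra `M` over `ℚ` generated as an
algebra by two elements and elements `x, y, z ∈ M` with
`(xy)z ≠ (xz)y + x(yz)`; not every two-generated Malcev dialgebra is a Leibniz
algebra. -/
theorem two_generated_malcev_dialgebra_not_leibniz :
    ∃ (D : MalcevDialgebraQ) (g₁ g₂ : D.carrier),
      (∀ p : Submodule ℚ D.carrier, g₁ ∈ p → g₂ ∈ p →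
        (∀ x ∈ p, ∀ y ∈ p, D.mul x y ∈ p) → p = ⊤) ∧
      ∃ x y z : D.carrier,
        D.mul (D.mul x y) z ≠ D.mul (D.mul x z) y + D.mul x (D.mul y z) := by
  refine ⟨nilpotentMalcevDialgebra, (![1, 0, 0, 0] : Fin 4 → ℚ), (![0, 1, 0, 0] : Fin 4 → ℚ),
    eq_top_of_nilpotentMul_closed, (![1, 0, 0, 0] : Fin 4 → ℚ), (![0, 1, 0, 0] : Fin 4 → ℚ),
    (![1, 0, 0, 0] : Fin 4 → ℚ), fun h => ?_⟩
  have h₃ := congrFun (show nilpotentMul (nilpotentMul ![1, 0, 0, 0] ![0, 1, 0, 0]) ![1, 0, 0, 0]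
    = nilpotentMul (nilpotentMul ![1, 0, 0, 0] ![1, 0, 0, 0]) ![0, 1, 0, 0]
      + nilpotentMul ![1, 0, 0, 0] (nilpotentMul ![0, 1, 0, 0] ![1, 0, 0, 0]) from h) 3
  simp [nilpotentMul_apply] at h₃
end

section
/- Let K_n = C(2n−2, n−1)/n (the Catalan number counting binary association types of degree n), and let Z : ℕ → ℕ be defined by Z_1 = 1 and Z_n = 2·Σ_{i=1}^{n−1} Z_{n−i}·K_i for n ≥ 2. Then Z_n = C(2n−2, n−1) for all n ≥ 1; equivalently, Z_n = n·K_n. -/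
/-- Weighting each term of the Catalan convolution by one of its two degrees gives, by symmetry,
half of the total degree times the next Catalan number. -/
theorem two_mul_sum_antidiagonal_succ_mul_catalan (m : ℕ) :
    2 * ∑ p ∈ Finset.HasAntidiagonal.antidiagonal m, (p.2 + 1) * catalan p.2 * catalan p.1 =
      (m + 2) * catalan (m + 1) := by
  have hswap : ∑ p ∈ Finset.HasAntidiagonal.antidiagonal m, (p.2 + 1) * catalan p.2 * catalan p.1 =
      ∑ p ∈ Finset.HasAntidiagonal.antidiagonal m, (p.1 + 1) * catalan p.1 * catalan p.2 :=
    (Finset.Nat.sum_antidiagonal_swap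
      (f := fun p : ℕ × ℕ => (p.2 + 1) * catalan p.2 * catalan p.1)).symm
  rw [two_mul]
  nth_rewrite 2 [hswap]
  rw [← Finset.sum_add_distrib, catalan_succ', Finset.mul_sum]
  refine Finset.sum_congr rfl fun p hp => ?_
  rw [← Finset.HasAntidiagonal.mem_antidiagonal.mp hp]
  ring

/-- Let `K_n = catalan (n−1)` (which equals `C(2n−2, n−1)/n`, the
number of binary association types in degree `n`) and let `Z : ℕ → ℕ` satisfy
`Z 1 = 1` and `Z n = 2·∑_{i=1}^{n−1} Z_{n−i}·K_i` for `n ≥ 2`.  Then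
`Z n = C(2n−2, n−1)` for all `n ≥ 1`; equivalently, `Z n = n·K_n`. -/
theorem dialgebra_association_types (Z : ℕ → ℕ)
    (hZ1 : Z 1 = 1)
    (hZrec : ∀ n, 2 ≤ n →
      Z n = 2 * ∑ i ∈ Finset.Ico 1 n, Z (n - i) * catalan (i - 1)) :
    ∀ n, 1 ≤ n →
      Z n = (2 * n - 2).choose (n - 1) ∧ Z n = n * catalan (n - 1) := by
  have hcat : ∀ m, Z (m + 1) = (m + 1) * catalan m := by
    intro m
    induction m using Nat.strong_induction_on with
    | _ m ih =>
      rcases m with _ | m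
      · simp [hZ1]
      · rw [hZrec (m + 1 + 1) (by omega), ← two_mul_sum_antidiagonal_succ_mul_catalan,
          Finset.Nat.sum_antidiagonal_eq_sum_range_succ_mk, Finset.sum_Ico_eq_sum_range]
        congr 1
        refine Finset.sum_congr rfl fun j hj => ?_
        have hjm : j < m + 1 := Finset.mem_range.mp hj
        rw [show m + 1 + 1 - (1 + j) = m - j + 1 by omega, ih (m - j) (by omega),
          Nat.add_sub_cancel_left]
  intro n hn
  obtain ⟨m, rfl⟩ := Nat.exists_eq_add_of_le' hn
  refine ⟨?_, hcat m⟩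
  rw [hcat m, succ_mul_catalan_eq_centralBinom, Nat.centralBinom_eq_two_mul_choose]
  rfl
end

section
/- Let K be a field and let A be a right anticommutative algebra over K. Then A satisfies the di-Malcev identity ((ab)c)d − ((ad)b)c − (a(cd))b − (ac)(bd) − a((bc)d) = 0 for all a,b,c,d if and only if A satisfies the identity (bd)(ca) + ((ba)c)d − ((bc)d)a + b(a(dc)) − (b(ad))c = 0 for all a,b,c,d. -/
/-- A right anticommutative algebra `A` over a field `K`
satisfies the di-Malcev identity
`((ab)c)d − ((ad)b)c − (a(cd))b − (ac)(bd) − a((bc)d) = 0`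
if and only if it satisfies the identity
`(bd)(ca) + ((ba)c)d − ((bc)d)a + b(a(dc)) − (b(ad))c = 0`. -/
theorem di_malcev_iff_identity22 (K : Type) [Field K]
    (A : Type) [AddCommGroup A] [Module K A]
    (f : A →ₗ[K] A →ₗ[K] A)
    (hra : ∀ a b c : A, f a (f b c) + f a (f c b) = 0) :
    (∀ a b c d : A,
      f (f (f a b) c) d - f (f (f a d) b) c - f (f a (f c d)) b
        - f (f a c) (f b d) - f a (f (f b c) d) = 0) ↔
    (∀ a b c d : A,
      f (f b d) (f c a) + f (f (f b a) c) d - f (f (f b c) d) a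
        + f b (f a (f d c)) - f (f b (f a d)) c = 0) := by
  have key : ∀ a b c d : A,
      f (f b d) (f c a) + f (f (f b a) c) d - f (f (f b c) d) a
          + f b (f a (f d c)) - f (f b (f a d)) c =
        -(f (f (f b c) d) a - f (f (f b a) c) d - f (f b (f d a)) c
          - f (f b d) (f c a) - f b (f (f c d) a)) := by
    intro a b c d
    have swap_inner : f b (f a d) = -f b (f d a) := eq_neg_of_add_eq_zero_left (hra b a d)
    have swap_nested : f b (f a (f d c)) = f b (f (f c d) a) := by
      rw [eq_neg_of_add_eq_zero_left (hra a d c), map_neg,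
        eq_neg_of_add_eq_zero_left (hra b a (f c d)), neg_neg]
    rw [swap_inner, swap_nested, map_neg, LinearMap.neg_apply]
    abel
  constructor
  · intro h a b c d
    rw [key, h, neg_zero]
  · intro h a b c d
    rw [← neg_eq_zero, ← key, h]
end

section
/- Let K be a field and let A be a right anticommutative algebra over K. Then A satisfies the di-Malcev identity ((ab)c)d − ((ad)b)c − (a(cd))b − (ac)(bd) − a((bc)d) = 0 for all a,b,c,d if and only if A satisfies the identity −(ca)(bd) − (c(ba))d + ((cb)d)a − ((cd)a)b + c(b(ad)) = 0 for all a,b,c,d. -/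
/-- A right anticommutative algebra `A` over a field `K`
satisfies the di-Malcev identity
`((ab)c)d − ((ad)b)c − (a(cd))b − (ac)(bd) − a((bc)d) = 0`
if and only if it satisfies the identity
`−(ca)(bd) − (c(ba))d + ((cb)d)a − ((cd)a)b + c(b(ad)) = 0`. -/
theorem di_malcev_iff_identity32 (K : Type) [Field K]
    (A : Type) [AddCommGroup A] [Module K A]
    (f : A →ₗ[K] A →ₗ[K] A)
    (hra : ∀ a b c : A, f a (f b c) + f a (f c b) = 0) :
    (∀ a b c d : A,
      f (f (f a b) c) d - f (f (f a d) b) c - f (f a (f c d)) b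
        - f (f a c) (f b d) - f a (f (f b c) d) = 0) ↔
    (∀ a b c d : A,
      -(f (f c a) (f b d)) - f (f c (f b a)) d + f (f (f c b) d) a
        - f (f (f c d) a) b + f c (f b (f a d)) = 0) := by
  have swap (a b c : A) : f a (f b c) = -f a (f c b) :=
    eq_neg_of_add_eq_zero_left (hra a b c)
  -- Up to sign, the two identities agree after permuting the variables.
  have key (a b c d : A) :
      -(f (f c a) (f b d)) - f (f c (f b a)) d + f (f (f c b) d) a
        - f (f (f c d) a) b + f c (f b (f a d)) =
      -(f (f (f c d) a) b - f (f (f c b) d) a - f (f c (f a b)) d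
        - f (f c a) (f d b) - f c (f (f d a) b)) := by
    rw [swap (f c a) b d, swap c b a, swap c (f d a) b, swap b d a]
    simp only [map_neg, LinearMap.neg_apply]
    abel
  constructor
  · intro h a b c d
    rw [key, h, neg_zero]
  · intro h a b c d
    rw [← neg_eq_zero, ← key, h]
end
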